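/- There exists an absolute constant C > 0 such that for every q ≥ 1, every p ∈ [2, ∞], every dimension d ∈ ℕ and every f ∈ ℓ^p(ℤ^d), one has ‖ sup_{t ∈ 𝔻, t ≤ d^{1/q}} |𝓜_t^q f| ‖_{ℓ^p(ℤ^d)} ≤ C ‖f‖_{ℓ^p(ℤ^d)}. -/

import Mathlib

open scoped ENNReal NNReal

open Classical in
noncomputable def latticeBall (q : ℝ) (d : ℕ) (t : ℝ) : Finset (Fin d → ℤ) :=
  (Finset.Icc (fun _ => -(⌈t⌉₊ : ℤ)) (fun _ => (⌈t⌉₊ : ℤ))).filter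
    (fun x => ∑ i, |(x i : ℝ)| ^ q ≤ t ^ q)

noncomputable def avgOp (q : ℝ) (d : ℕ) (t : ℝ) (f : (Fin d → ℤ) → ℂ) (x : Fin d → ℤ) : ℂ :=
  ((latticeBall q d t).card : ℂ)⁻¹ * ∑ y ∈ latticeBall q d t, f (x - y)

noncomputable def lpNorm (p : ℝ≥0∞) {d : ℕ} (g : (Fin d → ℤ) → ℝ≥0∞) : ℝ≥0∞ :=
  if p = ∞ then ⨆ x, g x else (∑' x, g x ^ p.toReal) ^ (1 / p.toReal)


namespace DF
open Finset

noncomputable def en (q : ℝ) {d : ℕ} (x : Fin d → ℤ) : ℝ := ∑ i, |(x i : ℝ)| ^ q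

def on {d : ℕ} (x : Fin d → ℤ) : ℕ := (univ.filter fun i => |x i| = 1).card

lemma en_nonneg (q : ℝ) {d : ℕ} (x : Fin d → ℤ) : 0 ≤ en q x :=
  Finset.sum_nonneg fun i _ => Real.rpow_nonneg (abs_nonneg _) _

lemma mem_ball {q : ℝ} (hq : 1 ≤ q) {d : ℕ} {t : ℝ} (ht : 0 ≤ t) (x : Fin d → ℤ) :
    x ∈ latticeBall q d t ↔ en q x ≤ t ^ q := by
  unfold latticeBall en
  rw [Finset.mem_filter]
  constructor
  · exact fun h => h.2
  · intro h
    refine ⟨?_, h⟩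
    have key : ∀ i, |x i| ≤ (⌈t⌉₊ : ℤ) := by
      intro i
      have h1 : |(x i : ℝ)| ^ q ≤ t ^ q :=
        le_trans (Finset.single_le_sum (f := fun i => |(x i : ℝ)| ^ q)
          (fun i _ => Real.rpow_nonneg (abs_nonneg _) _) (Finset.mem_univ i)) h
      have h2 : |(x i : ℝ)| ≤ t :=
        (Real.rpow_le_rpow_iff (abs_nonneg _) ht (by linarith)).1 h1
      have h3 : |(x i : ℝ)| ≤ (⌈t⌉₊ : ℝ) := h2.trans (Nat.le_ceil t)
      exact_mod_cast h3
    rw [Finset.mem_Icc]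
    exact ⟨fun i => (abs_le.1 (key i)).1, fun i => (abs_le.1 (key i)).2⟩

lemma abs_rpow_ge_one {q : ℝ} (hq : 1 ≤ q) {k : ℤ} (hk : k ≠ 0) : 1 ≤ |(k : ℝ)| ^ q := by
  apply Real.one_le_rpow _ (by linarith)
  have : 1 ≤ |k| := Int.one_le_abs hk
  exact_mod_cast this

lemma zero_rpow_abs {q : ℝ} (hq : 1 ≤ q) : |((0 : ℤ) : ℝ)| ^ q = 0 := by
  simp [Real.zero_rpow (by linarith : q ≠ 0)]

/-- number of nonzero coordinates is at most the energy -/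
lemma nonzero_le {q : ℝ} (hq : 1 ≤ q) {d : ℕ} (x : Fin d → ℤ) :
    ((univ.filter fun i => x i ≠ 0).card : ℝ) ≤ en q x := by
  unfold en
  rw [Finset.card_filter]
  push_cast
  apply Finset.sum_le_sum
  intro i _
  split_ifs with h
  · exact abs_rpow_ge_one hq h
  · exact Real.rpow_nonneg (abs_nonneg _) _

lemma on_le {q : ℝ} (hq : 1 ≤ q) {d : ℕ} (x : Fin d → ℤ) : (on x : ℝ) ≤ en q x := by
  refine le_trans ?_ (nonzero_le hq x)
  unfold on
  norm_cast
  apply Finset.card_le_card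
  intro i
  simp only [Finset.mem_filter, Finset.mem_univ, true_and]
  intro h h0
  simp [h0] at h

lemma en_update {q : ℝ} {d : ℕ} (x : Fin d → ℤ) (j : Fin d) (v : ℤ) :
    en q (Function.update x j v) = en q x - |(x j : ℝ)| ^ q + |(v : ℝ)| ^ q := by
  unfold en
  rw [← Finset.add_sum_erase _ _ (Finset.mem_univ j),
    ← Finset.add_sum_erase univ (fun i => |(x i : ℝ)| ^ q) (Finset.mem_univ j)]
  have : ∑ i ∈ univ.erase j, |((Function.update x j v) i : ℝ)| ^ q
      = ∑ i ∈ univ.erase j, |(x i : ℝ)| ^ q := by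
    apply Finset.sum_congr rfl
    intro i hi
    rw [Function.update_of_ne (Finset.ne_of_mem_erase hi)]
  rw [this]
  simp
  ring

lemma on_eq_sum {d : ℕ} (x : Fin d → ℤ) : on x = ∑ i, if |x i| = 1 then 1 else 0 := by
  unfold on; rw [Finset.card_filter]

lemma on_update {d : ℕ} (x : Fin d → ℤ) (j : Fin d) (v : ℤ) :
    on (Function.update x j v) + (if |x j| = 1 then 1 else 0)
      = on x + (if |v| = 1 then 1 else 0) := by
  rw [on_eq_sum, on_eq_sum]
  rw [← Finset.add_sum_erase _ _ (Finset.mem_univ j),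
    ← Finset.add_sum_erase univ (fun i => if |x i| = 1 then 1 else 0) (Finset.mem_univ j)]
  have : ∑ i ∈ univ.erase j, (if |(Function.update x j v) i| = 1 then 1 else 0)
      = ∑ i ∈ univ.erase j, (if |x i| = 1 then 1 else 0) := by
    apply Finset.sum_congr rfl
    intro i hi
    rw [Function.update_of_ne (Finset.ne_of_mem_erase hi)]
  rw [this]
  simp
  ring

open Classical in
noncomputable def Bz (q : ℝ) (d : ℕ) (t : ℝ) (S : Finset (Fin d)) (E : ℝ) : Finset (Fin d → ℤ) :=
  (latticeBall q d t).filter (fun x => (∀ i ∈ S, x i = 0) ∧ en q x ≤ E)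

lemma mem_Bz {q : ℝ} (hq : 1 ≤ q) {d : ℕ} {t : ℝ} (ht : 0 ≤ t) {S : Finset (Fin d)} {E : ℝ}
    (hE : E ≤ t ^ q) (x : Fin d → ℤ) :
    x ∈ Bz q d t S E ↔ (∀ i ∈ S, x i = 0) ∧ en q x ≤ E := by
  unfold Bz
  rw [Finset.mem_filter, mem_ball hq ht]
  constructor
  · exact fun h => h.2
  · exact fun h => ⟨h.2.trans hE, h⟩

lemma Bz_mono {q : ℝ} {d : ℕ} {t : ℝ} {S : Finset (Fin d)} {E E' : ℝ}
    (hE : E ≤ E') : Bz q d t S E ⊆ Bz q d t S E' := by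
  classical
  intro x
  unfold Bz
  rw [Finset.mem_filter, Finset.mem_filter]
  exact fun h => ⟨h.1, h.2.1, h.2.2.trans hE⟩

lemma Bz_sub {q : ℝ} {d : ℕ} {t : ℝ} {S : Finset (Fin d)} {E : ℝ} :
    Bz q d t S E ⊆ latticeBall q d t := by
  classical
  exact Finset.filter_subset _ _

/-- one-step adding, fixed position and sign -/
lemma add_step {q : ℝ} (hq : 1 ≤ q) {d : ℕ} {t : ℝ} (ht : 0 ≤ t) {S : Finset (Fin d)} {E : ℝ}
    (hE : E + 1 ≤ t ^ q) (φ : ℕ → ℝ) (hφ : ∀ k, 0 ≤ φ k) (j : Fin d) (hj : j ∉ S) (s : ℤ)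
    (hs : |s| = 1) :
    ∑ x ∈ (Bz q d t S E) with x j = 0, φ (on x)
      ≤ ∑ y ∈ (Bz q d t S (E + 1)) with y j = s, φ (on y - 1) := by
  have hs' : |(s : ℝ)| = 1 := by exact_mod_cast hs
  refine le_trans (le_of_eq ?_) (Finset.sum_le_sum_of_subset_of_nonneg
    (s := ((Bz q d t S E).filter (fun x => x j = 0)).image (fun x => Function.update x j s))
    ?_ (fun _ _ _ => hφ _))
  · rw [Finset.sum_image]
    · apply Finset.sum_congr rfl
      intro x hx
      have hx0 : x j = 0 := (Finset.mem_filter.1 hx).2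
      have := on_update x j s
      rw [if_pos hs, hx0] at this
      simp at this
      rw [this]; simp
    · intro x hx y hy hxy
      have hx0 : x j = 0 := (Finset.mem_filter.1 hx).2
      have hy0 : y j = 0 := (Finset.mem_filter.1 hy).2
      funext i
      by_cases hi : i = j
      · rw [hi, hx0, hy0]
      · have := congrFun hxy i
        simpa [Function.update_of_ne hi] using this
  · intro y hy
    obtain ⟨x, hx, rfl⟩ := Finset.mem_image.1 hy
    obtain ⟨hx, hx0⟩ := Finset.mem_filter.1 hx
    rw [mem_Bz hq ht (by linarith)] at hx
    rw [Finset.mem_filter, mem_Bz hq ht hE]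
    refine ⟨⟨?_, ?_⟩, by simp⟩
    · intro i hi
      rw [Function.update_of_ne (by rintro rfl; exact hj hi)]
      exact hx.1 i hi
    · rw [en_update, hx0, zero_rpow_abs hq, hs', Real.one_rpow]
      linarith [hx.2]

lemma add_lemma {q : ℝ} (hq : 1 ≤ q) {d : ℕ} {t : ℝ} (ht : 0 ≤ t) {S : Finset (Fin d)} {E : ℝ}
    (hE : E + 1 ≤ t ^ q) (φ : ℕ → ℝ) (hφ : ∀ k, 0 ≤ φ k) :
    2 * ((d : ℝ) - S.card - E) * ∑ x ∈ Bz q d t S E, φ (on x)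
      ≤ ∑ y ∈ Bz q d t S (E + 1), (on y : ℝ) * φ (on y - 1) := by
  classical
  have h1 : ∀ j ∈ (univ \ S), 2 * ∑ x ∈ (Bz q d t S E) with x j = 0, φ (on x)
      ≤ ∑ y ∈ (Bz q d t S (E + 1)) with |y j| = 1, φ (on y - 1) := by
    intro j hj
    have hj : j ∉ S := (Finset.mem_sdiff.1 hj).2
    have a1 := add_step hq ht hE φ hφ j hj 1 (by simp)
    have a2 := add_step hq ht hE φ hφ j hj (-1) (by simp)
    have : (Bz q d t S (E + 1)).filter (fun y => |y j| = 1)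
        = (Bz q d t S (E + 1)).filter (fun y => y j = 1) ∪
          (Bz q d t S (E + 1)).filter (fun y => y j = -1) := by
      rw [← Finset.filter_or]
      apply Finset.filter_congr
      intro y _
      exact abs_eq (by norm_num)
    rw [this, Finset.sum_union]
    · linarith
    · rw [Finset.disjoint_filter]
      intro y _ h; rw [h]; norm_num
  have h2 := Finset.sum_le_sum h1
  rw [← Finset.mul_sum] at h2
  simp_rw [Finset.sum_filter] at h2
  rw [Finset.sum_comm, Finset.sum_comm (t := Bz q d t S (E + 1))] at h2
  have h3 : ((d : ℝ) - S.card - E) * ∑ x ∈ Bz q d t S E, φ (on x)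
      ≤ ∑ y ∈ Bz q d t S E, ∑ x ∈ univ \ S, if y x = 0 then φ (on y) else 0 := by
    rw [Finset.mul_sum]
    apply Finset.sum_le_sum
    intro x hx
    rw [← Finset.sum_filter, Finset.sum_const, nsmul_eq_mul]
    apply mul_le_mul_of_nonneg_right _ (hφ _)
    rw [mem_Bz hq ht (by linarith)] at hx
    have c1 := nonzero_le hq x
    have c2 : univ ⊆ ((univ \ S).filter (fun i => x i = 0)) ∪ S ∪ univ.filter (fun i => x i ≠ 0) := by
      intro i _
      simp only [Finset.mem_union, Finset.mem_filter, Finset.mem_sdiff, Finset.mem_univ, true_and]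
      tauto
    have c3 := (Finset.card_le_card c2).trans ((Finset.card_union_le _ _).trans
      (Nat.add_le_add_right (Finset.card_union_le _ _) _))
    rw [Finset.card_univ, Fintype.card_fin] at c3
    have c4 : (d : ℝ) ≤ (((univ \ S).filter (fun i => x i = 0)).card : ℝ) + S.card
      + ((univ.filter (fun i => x i ≠ 0)).card : ℝ) := by exact_mod_cast c3
    linarith [hx.2]
  have h4 : ∑ y ∈ Bz q d t S (E + 1), ∑ x ∈ univ \ S, (if |y x| = 1 then φ (on y - 1) else 0)
      ≤ ∑ y ∈ Bz q d t S (E + 1), (on y : ℝ) * φ (on y - 1) := by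
    apply Finset.sum_le_sum
    intro y _
    rw [← Finset.sum_filter, Finset.sum_const, nsmul_eq_mul]
    apply mul_le_mul_of_nonneg_right _ (hφ _)
    unfold on
    norm_cast
    apply Finset.card_le_card
    apply Finset.filter_subset_filter
    exact Finset.subset_univ _
  linarith

/-- b_S(E) ≤ (1/6) b_S(E+1) -/
lemma card_step {q : ℝ} (hq : 1 ≤ q) {d : ℕ} {t : ℝ} (ht : 1 ≤ t) (hd : 4 * t ^ q ≤ d)
    {S : Finset (Fin d)} (hS : S.card ≤ 1) {E : ℝ} (hE : E + 1 ≤ t ^ q) :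
    (3 / 2 * (d : ℝ)) * ((Bz q d t S E).card : ℝ) ≤ t ^ q * ((Bz q d t S (E + 1)).card : ℝ) := by
  have ht0 : (0:ℝ) ≤ t := by linarith
  have h := add_lemma hq ht0 (S := S) hE (fun _ => 1) (fun _ => zero_le_one)
  simp only [Finset.sum_const, nsmul_eq_mul, mul_one] at h
  have hS' : (S.card : ℝ) ≤ 1 := by exact_mod_cast hS
  have h1 : ∑ y ∈ Bz q d t S (E + 1), (on y : ℝ) ≤ t ^ q * ((Bz q d t S (E + 1)).card : ℝ) := by
    rw [mul_comm, ← nsmul_eq_mul]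
    apply Finset.sum_le_card_nsmul
    intro y hy
    rw [mem_Bz hq ht0 hE] at hy
    exact (on_le hq y).trans (hy.2.trans hE)
  refine le_trans ?_ (h.trans h1)
  apply mul_le_mul_of_nonneg_right _ (Nat.cast_nonneg _)
  linarith

lemma card_step6 {q : ℝ} (hq : 1 ≤ q) {d : ℕ} {t : ℝ} (ht : 1 ≤ t) (hd : 4 * t ^ q ≤ d)
    {S : Finset (Fin d)} (hS : S.card ≤ 1) {E : ℝ} (hE : E + 1 ≤ t ^ q) :
    ((Bz q d t S E).card : ℝ) ≤ (1 / 6) * ((Bz q d t S (E + 1)).card : ℝ) := by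
  have h := card_step hq ht hd hS hE
  have hN : 1 ≤ t ^ q := Real.one_le_rpow ht (by linarith)
  have h2 : 6 * t ^ q * ((Bz q d t S E).card : ℝ) ≤ t ^ q * ((Bz q d t S (E + 1)).card : ℝ) := by
    refine le_trans ?_ h
    apply mul_le_mul_of_nonneg_right _ (Nat.cast_nonneg _)
    linarith
  have h3 : t ^ q * (6 * ((Bz q d t S E).card : ℝ)) ≤ t ^ q * ((Bz q d t S (E + 1)).card : ℝ) := by
    linarith
  have h4 := le_of_mul_le_mul_left h3 (by linarith)
  linarith

lemma card_iter {q : ℝ} (hq : 1 ≤ q) {d : ℕ} {t : ℝ} (ht : 1 ≤ t) (hd : 4 * t ^ q ≤ d)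
    {S : Finset (Fin d)} (hS : S.card ≤ 1) (k : ℕ) {E : ℝ} (hE : E + 1 ≤ t ^ q) :
    ((Bz q d t S (E - k)).card : ℝ) ≤ (1 / 6) ^ k * ((Bz q d t S E).card : ℝ) := by
  induction k with
  | zero => simp
  | succ k ih =>
    have h := card_step6 hq ht hd hS (E := E - (k + 1 : ℕ)) (by
      push_cast; have : (0:ℝ) ≤ k := Nat.cast_nonneg k
      linarith)
    have e : E - ((k + 1 : ℕ) : ℝ) + 1 = E - k := by push_cast; ring
    rw [e] at h
    refine h.trans ?_
    rw [pow_succ]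
    linarith

end DF

namespace DF
open Finset

lemma fiber_le {q : ℝ} (hq : 1 ≤ q) {d : ℕ} {t : ℝ} (ht : 0 ≤ t) (i : Fin d) (v : ℤ)
    (ψ ψ' : (Fin d → ℤ) → ℝ) (hψ' : ∀ x, 0 ≤ ψ' x)
    (h : ∀ x, x i = v → ψ x = ψ' (Function.update x i 0)) :
    ∑ x ∈ latticeBall q d t with x i = v, ψ x ≤
      ∑ x ∈ Bz q d t {i} (t ^ q - |(v : ℝ)| ^ q), ψ' x := by
  have hv : 0 ≤ |(v : ℝ)| ^ q := Real.rpow_nonneg (abs_nonneg _) _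
  refine le_trans (le_of_eq ?_) (Finset.sum_le_sum_of_subset_of_nonneg
    (s := ((latticeBall q d t).filter (fun x => x i = v)).image (fun x => Function.update x i 0))
    ?_ (fun _ _ _ => hψ' _))
  · rw [Finset.sum_image]
    · apply Finset.sum_congr rfl
      intro x hx
      exact h x (Finset.mem_filter.1 hx).2
    · intro x hx y hy hxy
      have hx0 : x i = v := (Finset.mem_filter.1 hx).2
      have hy0 : y i = v := (Finset.mem_filter.1 hy).2
      funext j
      by_cases hi : j = i
      · rw [hi, hx0, hy0]
      · have := congrFun hxy j
        simpa [Function.update_of_ne hi] using this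
  · intro y hy
    obtain ⟨x, hx, rfl⟩ := Finset.mem_image.1 hy
    obtain ⟨hx, hx0⟩ := Finset.mem_filter.1 hx
    rw [mem_ball hq ht] at hx
    rw [mem_Bz hq ht (by linarith)]
    refine ⟨by simp, ?_⟩
    rw [en_update, hx0, zero_rpow_abs hq]
    linarith

lemma sum_fiber {q : ℝ} {d : ℕ} {t : ℝ} (i : Fin d) (ψ : (Fin d → ℤ) → ℝ) :
    ∑ x ∈ latticeBall q d t, ψ x =
      ∑ v ∈ Finset.Icc (-(⌈t⌉₊ : ℤ)) (⌈t⌉₊ : ℤ), ∑ x ∈ latticeBall q d t with x i = v, ψ x := by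
  rw [Finset.sum_fiberwise_of_maps_to]
  intro x hx
  unfold latticeBall at hx
  have h := (Finset.mem_filter.1 hx).1
  rw [Finset.mem_Icc] at h ⊢
  exact ⟨h.1 i, h.2 i⟩

lemma sum_Icc_le (T : ℕ) (g : ℕ → ℝ) (hg : ∀ k, 0 ≤ g k) :
    ∑ v ∈ Finset.Icc (-(T : ℤ)) (T : ℤ), g v.natAbs ≤ 2 * ∑ k ∈ range (T + 1), g k := by
  have hsub : Finset.Icc (-(T : ℤ)) (T : ℤ) ⊆
      (range (T + 1)).image (fun k : ℕ => (k : ℤ)) ∪ (range (T + 1)).image (fun k : ℕ => -(k : ℤ)) := by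
    intro v hv
    rw [Finset.mem_Icc] at hv
    simp only [Finset.mem_union, Finset.mem_image, Finset.mem_range]
    rcases le_total 0 v with h | h
    · left; exact ⟨v.natAbs, by omega, by omega⟩
    · right; exact ⟨v.natAbs, by omega, by omega⟩
  refine (Finset.sum_le_sum_of_subset_of_nonneg hsub (fun _ _ _ => hg _)).trans ?_
  refine (le_trans (le_add_of_nonneg_right
    (Finset.sum_nonneg (s := (range (T + 1)).image (fun k : ℕ => (k : ℤ)) ∩
      (range (T + 1)).image (fun k : ℕ => -(k : ℤ))) (fun v _ => hg v.natAbs)))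
    (le_of_eq (Finset.sum_union_inter))).trans ?_
  rw [Finset.sum_image (by intro a _ b _ h; simpa using h),
    Finset.sum_image (by intro a _ b _ h; simpa using h)]
  simp
  linarith

lemma geom_le (r : ℝ) (h0 : 0 ≤ r) (h1 : r ≤ 1 / 2) (n : ℕ) : ∑ k ∈ range n, r ^ k ≤ 2 := by
  have : ∑ k ∈ range n, r ^ k = (1 - r ^ n) / (1 - r) := by
    rw [geom_sum_eq (by linarith)]
    rw [← neg_div_neg_eq]; ring_nf
  rw [this, div_le_iff₀ (by linarith)]
  have : 0 ≤ r ^ n := by positivity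
  linarith

lemma self_le_rpow {q : ℝ} (hq : 1 ≤ q) (v : ℤ) (hv : v ≠ 0) : (v.natAbs : ℝ) ≤ |(v : ℝ)| ^ q := by
  have h1 : 1 ≤ |(v:ℝ)| := by
    have : 1 ≤ |v| := Int.one_le_abs hv
    exact_mod_cast this
  have := Real.rpow_le_rpow_of_exponent_le h1 hq
  rw [Real.rpow_one] at this
  rw [Nat.cast_natAbs]
  push_cast
  exact this

lemma sq_le_pow (k : ℕ) : ((k + 1 : ℕ) : ℝ) ^ 2 ≤ 2 * 3 ^ k := by
  induction k with
  | zero => norm_num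
  | succ k ih =>
    rcases Nat.eq_zero_or_pos k with h | h
    · subst h; norm_num
    · have h' : (1:ℝ) ≤ k := by exact_mod_cast h
      rw [pow_succ 3]
      push_cast at *
      nlinarith

lemma card_Bz_pred {q : ℝ} (hq : 1 ≤ q) {d : ℕ} {t : ℝ} (ht : 1 ≤ t) (hd : 4 * t ^ q ≤ d)
    (i : Fin d) :
    (3 / 2 * (d : ℝ)) * ((Bz q d t {i} (t ^ q - 1)).card : ℝ)
      ≤ t ^ q * ((latticeBall q d t).card : ℝ) := by
  have h := card_step hq ht hd (S := {i}) (by simp) (E := t ^ q - 1) (by linarith)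
  refine h.trans ?_
  apply mul_le_mul_of_nonneg_left _ (by positivity)
  exact_mod_cast Finset.card_le_card Bz_sub

lemma second_moment {q : ℝ} (hq : 1 ≤ q) {d : ℕ} {t : ℝ} (ht : 1 ≤ t) (hd : 4 * t ^ q ≤ d)
    (i : Fin d) :
    (d : ℝ) * ∑ x ∈ latticeBall q d t, (x i : ℝ) ^ 2 ≤ 16 * t ^ q * ((latticeBall q d t).card : ℝ) := by
  have ht0 : (0:ℝ) ≤ t := by linarith
  set b := ((Bz q d t {i} (t ^ q - 1)).card : ℝ) with hb
  have hb0 : 0 ≤ b := Nat.cast_nonneg _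
  have key : ∑ x ∈ latticeBall q d t, (x i : ℝ) ^ 2 ≤ 16 * b := by
    rw [sum_fiber i]
    have h1 : ∀ v ∈ Finset.Icc (-(⌈t⌉₊ : ℤ)) (⌈t⌉₊ : ℤ),
        ∑ x ∈ latticeBall q d t with x i = v, (x i : ℝ) ^ 2 ≤ (4 * (1 / 2) ^ v.natAbs) * b := by
      intro v _
      by_cases hv : v = 0
      · subst hv
        rw [Finset.sum_eq_zero]
        · positivity
        · intro x hx
          rw [(Finset.mem_filter.1 hx).2]; simp
      · refine (fiber_le hq ht0 i v _ (fun _ => (v : ℝ) ^ 2) (fun _ => by positivity)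
          (fun x hx => by rw [hx])).trans ?_
        rw [Finset.sum_const, nsmul_eq_mul]
        have hk : 1 ≤ v.natAbs := Int.natAbs_pos.2 hv
        obtain ⟨k, hk⟩ : ∃ k, v.natAbs = k + 1 := ⟨v.natAbs - 1, by omega⟩
        have hle := self_le_rpow hq v hv
        have c1 : ((Bz q d t {i} (t ^ q - |(v : ℝ)| ^ q)).card : ℝ) ≤ (1 / 6) ^ k * b := by
          have c2 := card_iter hq ht hd (S := {i}) (by simp) k (E := t ^ q - 1) (by linarith)
          refine le_trans ?_ c2
          have : Bz q d t {i} (t ^ q - |(v : ℝ)| ^ q) ⊆ Bz q d t {i} (t ^ q - 1 - k) := by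
            apply Bz_mono
            rw [hk] at hle; push_cast at hle; linarith
          exact_mod_cast Finset.card_le_card this
        have c3 : (v : ℝ) ^ 2 ≤ 2 * 3 ^ k := by
          have := sq_le_pow k
          rw [← hk, Nat.cast_natAbs] at this
          push_cast at this
          rwa [sq_abs] at this
        calc ((Bz q d t {i} (t ^ q - |(v : ℝ)| ^ q)).card : ℝ) * (v : ℝ) ^ 2
            ≤ ((1 / 6) ^ k * b) * (2 * 3 ^ k) := by gcongr
          _ = (4 * (1 / 2) ^ (k + 1)) * b := by
            rw [pow_succ, show (1 / 6 : ℝ) = (1 / 2) * (1 / 3) by norm_num, mul_pow,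
              one_div_pow 3]
            field_simp
            ring
          _ = _ := by rw [hk]
    refine (Finset.sum_le_sum h1).trans ?_
    rw [← Finset.sum_mul, ← Finset.mul_sum]
    have := sum_Icc_le ⌈t⌉₊ (fun k => (1 / 2 : ℝ) ^ k) (fun k => by positivity)
    have g := geom_le (1 / 2) (by norm_num) le_rfl (⌈t⌉₊ + 1)
    apply mul_le_mul_of_nonneg_right _ hb0
    linarith
  have h2 := card_Bz_pred hq ht hd i
  rw [← hb] at h2
  have hd0 : (0:ℝ) ≤ d := Nat.cast_nonneg d
  have h3 := mul_le_mul_of_nonneg_left key hd0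
  have : 0 ≤ t ^ q * ((latticeBall q d t).card : ℝ) := by positivity
  linarith

lemma phi_Bz {q : ℝ} (hq : 1 ≤ q) {d : ℕ} {t : ℝ} (ht : 1 ≤ t) (hd : 4 * t ^ q ≤ d)
    {S : Finset (Fin d)} (hS : S.card ≤ 1) {E : ℝ} (hE : E + 1 ≤ t ^ q) :
    (3 / 2 * (d : ℝ)) * ∑ x ∈ Bz q d t S E, (1 / ((on x : ℝ) + 1))
      ≤ ((Bz q d t S (E + 1)).card : ℝ) := by
  have ht0 : (0:ℝ) ≤ t := by linarith
  have h := add_lemma hq ht0 (S := S) hE (fun k => 1 / ((k : ℝ) + 1)) (fun _ => by positivity)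
  have hS' : (S.card : ℝ) ≤ 1 := by exact_mod_cast hS
  have h1 : ∑ y ∈ Bz q d t S (E + 1), (on y : ℝ) * (1 / (((on y - 1 : ℕ) : ℝ) + 1))
      ≤ ((Bz q d t S (E + 1)).card : ℝ) := by
    rw [← mul_one ((Bz q d t S (E + 1)).card : ℝ), ← nsmul_eq_mul]
    apply Finset.sum_le_card_nsmul
    intro y hy
    rcases Nat.eq_zero_or_pos (on y) with h0 | h0
    · rw [h0]; simp
    · rw [Nat.cast_sub h0]
      have : (0:ℝ) < on y := by exact_mod_cast h0
      push_cast
      rw [sub_add_cancel]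
      apply le_of_eq; field_simp
  refine le_trans ?_ (h.trans h1)
  apply mul_le_mul_of_nonneg_right _ (Finset.sum_nonneg fun _ _ => by positivity)
  linarith

lemma big_moment {q : ℝ} (hq : 1 ≤ q) {d : ℕ} {t : ℝ} (ht : 1 ≤ t) (hd : 4 * t ^ q ≤ d)
    (i : Fin d) :
    (d : ℝ) * ∑ x ∈ latticeBall q d t,
      (if 2 ≤ |x i| then |(x i : ℝ)| ^ q else 0) * (1 / ((on x : ℝ) + 1))
      ≤ 144 * ((latticeBall q d t).card : ℝ) := by
  have ht0 : (0:ℝ) ≤ t := by linarith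
  have hd0 : (0:ℝ) ≤ d := Nat.cast_nonneg d
  set b := ((latticeBall q d t).card : ℝ) with hb
  have hb0 : 0 ≤ b := Nat.cast_nonneg _
  rw [sum_fiber i, Finset.mul_sum]
  have h1 : ∀ v ∈ Finset.Icc (-(⌈t⌉₊ : ℤ)) (⌈t⌉₊ : ℤ),
      (d : ℝ) * ∑ x ∈ latticeBall q d t with x i = v,
        (if 2 ≤ |x i| then |(x i : ℝ)| ^ q else 0) * (1 / ((on x : ℝ) + 1))
        ≤ (36 * (1 / 3) ^ v.natAbs) * b := by
    intro v _
    by_cases hv : 2 ≤ |v|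
    · have hv0 : v ≠ 0 := by rintro rfl; simp at hv
      have hle := self_le_rpow hq v hv0
      have hk2 : 2 ≤ v.natAbs := by rw [Int.abs_eq_natAbs] at hv; exact_mod_cast hv
      set K := ⌊|(v : ℝ)| ^ q⌋₊ with hK
      have hKv : v.natAbs ≤ K := Nat.le_floor hle
      have hK1 : (K : ℝ) ≤ |(v : ℝ)| ^ q := Nat.floor_le (by positivity)
      have hK2 : |(v : ℝ)| ^ q ≤ K + 1 := (Nat.lt_floor_add_one _).le
      obtain ⟨k, hk⟩ : ∃ k, K = k + 2 := ⟨K - 2, by omega⟩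
      have f1 := fiber_le hq ht0 i v
        (fun x => (if 2 ≤ |x i| then |(x i : ℝ)| ^ q else 0) * (1 / ((on x : ℝ) + 1)))
        (fun x => |(v : ℝ)| ^ q * (1 / ((on x : ℝ) + 1))) (fun x => by positivity)
        (fun x hx => by
          have := on_update x i 0
          rw [hx, if_neg (by omega)] at this
          simp at this
          rw [this]
          simp only [hx, if_pos hv])
      rw [← Finset.mul_sum] at f1
      have hE : t ^ q - |(v : ℝ)| ^ q + 1 ≤ t ^ q - 1 - k := by
        rw [hk] at hK1; push_cast at hK1; linarith
      have hkk : (0:ℝ) ≤ k := Nat.cast_nonneg k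
      have f2 := phi_Bz hq ht hd (S := {i}) (by simp) (E := t ^ q - |(v : ℝ)| ^ q) (by linarith)
      have f3 : ((Bz q d t {i} (t ^ q - |(v : ℝ)| ^ q + 1)).card : ℝ) ≤ (1 / 6) ^ k * b := by
        have c2 := card_iter hq ht hd (S := {i}) (by simp) k (E := t ^ q - 1) (by linarith)
        have c3 : ((Bz q d t {i} (t ^ q - |(v : ℝ)| ^ q + 1)).card : ℝ) ≤
            ((Bz q d t {i} (t ^ q - 1 - k)).card : ℝ) := by
          exact_mod_cast Finset.card_le_card (Bz_mono hE)
        have c4 : ((Bz q d t {i} (t ^ q - 1)).card : ℝ) ≤ b := by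
          rw [hb]; exact_mod_cast Finset.card_le_card Bz_sub
        refine c3.trans (c2.trans ?_)
        gcongr
      have f4 : (d : ℝ) * ∑ x ∈ Bz q d t {i} (t ^ q - |(v : ℝ)| ^ q), (1 / ((on x : ℝ) + 1))
          ≤ (1 / 6) ^ k * b := by
        have : 0 ≤ (d : ℝ) * ∑ x ∈ Bz q d t {i} (t ^ q - |(v : ℝ)| ^ q), (1 / ((on x : ℝ) + 1)) :=
          mul_nonneg hd0 (Finset.sum_nonneg fun _ _ => by positivity)
        linarith
      have f5 : |(v : ℝ)| ^ q ≤ 2 ^ K := by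
        refine hK2.trans ?_
        have : K + 1 ≤ 2 ^ K := Nat.lt_two_pow_self
        exact_mod_cast this
      calc (d : ℝ) * ∑ x ∈ latticeBall q d t with x i = v,
            (if 2 ≤ |x i| then |(x i : ℝ)| ^ q else 0) * (1 / ((on x : ℝ) + 1))
          ≤ (d : ℝ) * (|(v : ℝ)| ^ q *
            ∑ x ∈ Bz q d t {i} (t ^ q - |(v : ℝ)| ^ q), (1 / ((on x : ℝ) + 1))) :=
              mul_le_mul_of_nonneg_left f1 hd0
        _ = |(v : ℝ)| ^ q * ((d : ℝ) *
            ∑ x ∈ Bz q d t {i} (t ^ q - |(v : ℝ)| ^ q), (1 / ((on x : ℝ) + 1))) := by ring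
        _ ≤ 2 ^ K * ((1 / 6) ^ k * b) := by gcongr
        _ = (36 * (1 / 3) ^ K) * b := by
          rw [hk, show (1 / 6 : ℝ) = (1 / 2) * (1 / 3) by norm_num, mul_pow, pow_add, pow_add,
            one_div_pow 2]
          field_simp
          ring
        _ ≤ _ := by
          have : (1 / 3 : ℝ) ^ K ≤ (1 / 3) ^ v.natAbs :=
            pow_le_pow_of_le_one (by norm_num) (by norm_num) hKv
          gcongr
    · rw [Finset.sum_eq_zero]
      · simp; positivity
      · intro x hx
        rw [(Finset.mem_filter.1 hx).2, if_neg hv, zero_mul]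
  refine (Finset.sum_le_sum h1).trans ?_
  rw [← Finset.sum_mul, ← Finset.mul_sum]
  have := sum_Icc_le ⌈t⌉₊ (fun k => (1 / 3 : ℝ) ^ k) (fun k => by positivity)
  have g := geom_le (1 / 3) (by norm_num) (by norm_num) (⌈t⌉₊ + 1)
  apply mul_le_mul_of_nonneg_right _ hb0
  linarith

lemma en_split {q : ℝ} (hq : 1 ≤ q) {d : ℕ} (x : Fin d → ℤ) :
    en q x = (∑ i, if 2 ≤ |x i| then |(x i : ℝ)| ^ q else 0) + on x := by
  rw [on_eq_sum]
  push_cast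
  rw [← Finset.sum_add_distrib]
  unfold en
  apply Finset.sum_congr rfl
  intro i _
  by_cases h : 2 ≤ |x i|
  · rw [if_pos h, if_neg (by omega), add_zero]
  · rw [if_neg h]
    by_cases h1 : |x i| = 1
    · rw [if_pos h1]
      have : |(x i : ℝ)| = 1 := by exact_mod_cast h1
      rw [this]; simp
    · have h0 : x i = 0 := by
        have := abs_nonneg (x i)
        exact abs_eq_zero.1 (by omega)
      rw [if_neg h1, h0, zero_rpow_abs hq]; simp

lemma inv_on_moment {q : ℝ} (hq : 1 ≤ q) {d : ℕ} {t : ℝ} (ht : 1 ≤ t) (hd : 4 * t ^ q ≤ d) :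
    t ^ q * ∑ x ∈ latticeBall q d t, (1 / ((on x : ℝ) + 1))
      ≤ 146 * ((latticeBall q d t).card : ℝ) := by
  classical
  have ht0 : (0:ℝ) ≤ t := by linarith
  have hN : 1 ≤ t ^ q := Real.one_le_rpow ht (by linarith)
  have hd0 : (0:ℝ) < d := by linarith
  set b := ((latticeBall q d t).card : ℝ) with hb
  have hb0 : 0 ≤ b := Nat.cast_nonneg _
  -- small energy part
  have p1 : t ^ q * ∑ x ∈ latticeBall q d t,
      (if en q x ≤ t ^ q - 1 then (1 / ((on x : ℝ) + 1)) else 0) ≤ b := by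
    rw [← Finset.sum_filter]
    have e : (latticeBall q d t).filter (fun x => en q x ≤ t ^ q - 1) = Bz q d t ∅ (t ^ q - 1) := by
      unfold Bz; simp
    rw [e]
    have h := phi_Bz hq ht hd (S := ∅) (by simp) (E := t ^ q - 1) (by linarith)
    have c4 : ((Bz q d t ∅ (t ^ q - 1 + 1)).card : ℝ) ≤ b := by
      rw [hb]; exact_mod_cast Finset.card_le_card Bz_sub
    refine le_trans ?_ (h.trans c4)
    apply mul_le_mul_of_nonneg_right _ (Finset.sum_nonneg fun _ _ => by positivity)
    linarith
  have p2 : ∑ x ∈ latticeBall q d t,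
      (∑ i, if 2 ≤ |x i| then |(x i : ℝ)| ^ q else 0) * (1 / ((on x : ℝ) + 1)) ≤ 144 * b := by
    simp_rw [Finset.sum_mul]
    rw [Finset.sum_comm]
    have : ∀ i ∈ (univ : Finset (Fin d)), ∑ x ∈ latticeBall q d t,
      (if 2 ≤ |x i| then |(x i : ℝ)| ^ q else 0) * (1 / ((on x : ℝ) + 1)) ≤ 144 * b / d := by
      intro i _
      rw [le_div_iff₀ hd0, mul_comm]
      exact big_moment hq ht hd i
    refine (Finset.sum_le_sum this).trans ?_
    simp
    apply le_of_eq; field_simp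
  have p3 : t ^ q * ∑ x ∈ latticeBall q d t, (1 / ((on x : ℝ) + 1)) ≤
      t ^ q * ∑ x ∈ latticeBall q d t,
      (if en q x ≤ t ^ q - 1 then (1 / ((on x : ℝ) + 1)) else 0) +
      ∑ x ∈ latticeBall q d t,
      (∑ i, if 2 ≤ |x i| then |(x i : ℝ)| ^ q else 0) * (1 / ((on x : ℝ) + 1)) +
      ∑ x ∈ latticeBall q d t, 1 := by
    rw [Finset.mul_sum, Finset.mul_sum, ← Finset.sum_add_distrib, ← Finset.sum_add_distrib]
    apply Finset.sum_le_sum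
    intro x hx
    have hS : 0 ≤ ∑ i, (if 2 ≤ |x i| then |(x i : ℝ)| ^ q else 0) :=
      Finset.sum_nonneg fun i _ => by split_ifs <;> positivity
    have ho : (0:ℝ) ≤ on x := Nat.cast_nonneg _
    split_ifs with h
    · have : 0 ≤ (∑ i, if 2 ≤ |x i| then |(x i : ℝ)| ^ q else 0) * (1 / ((on x : ℝ) + 1)) :=
        mul_nonneg hS (by positivity)
      linarith
    · rw [en_split hq] at h
      push Not at h
      have : 1 = ((on x : ℝ) + 1) * (1 / ((on x : ℝ) + 1)) := by field_simp
      rw [mul_zero, zero_add]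
      refine le_trans ?_ (add_le_add_right this.ge _)
      rw [← add_mul]
      apply mul_le_mul_of_nonneg_right _ (by positivity)
      linarith
  rw [Finset.sum_const, nsmul_eq_mul, mul_one] at p3
  linarith

end DF

namespace DF
open Finset

/-- average over permutations of a function of a tuple -/
lemma perm_avg {d k : ℕ} (F : (Fin k ↪ Fin d) → ℝ) (e : Fin k ↪ Fin d) :
    (Fintype.card (Fin k ↪ Fin d) : ℝ) * ∑ σ : Equiv.Perm (Fin d), F (e.trans σ.toEmbedding)
      = (Fintype.card (Equiv.Perm (Fin d)) : ℝ) * ∑ e' : Fin k ↪ Fin d, F e' := by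
  have h1 : ∀ e' : Fin k ↪ Fin d, ∑ σ : Equiv.Perm (Fin d), F (e'.trans σ.toEmbedding)
      = ∑ σ : Equiv.Perm (Fin d), F (e.trans σ.toEmbedding) := by
    intro e'
    haveI := Equiv.Perm.isMultiplyPretransitive (Fin d) k
    obtain ⟨π, hπ⟩ := MulAction.exists_smul_eq (Equiv.Perm (Fin d)) e e'
    have hπ' : e' = e.trans π.toEmbedding := by
      rw [← hπ]; ext i; rfl
    rw [hπ']
    refine Fintype.sum_equiv (Equiv.mulRight π) _ _ (fun σ => ?_)
    congr 1
  have h2 : ∑ e' : Fin k ↪ Fin d, ∑ σ : Equiv.Perm (Fin d), F (e'.trans σ.toEmbedding)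
      = (Fintype.card (Fin k ↪ Fin d) : ℝ) * ∑ σ : Equiv.Perm (Fin d), F (e.trans σ.toEmbedding) := by
    rw [Finset.sum_congr rfl (fun e' _ => h1 e'), Finset.sum_const, nsmul_eq_mul]
    rfl
  rw [← h2, Finset.sum_comm]
  have h3 : ∀ σ : Equiv.Perm (Fin d), ∑ e' : Fin k ↪ Fin d, F (e'.trans σ.toEmbedding)
      = ∑ e' : Fin k ↪ Fin d, F e' := by
    intro σ
    refine Fintype.sum_equiv
      (Equiv.embeddingCongr (Equiv.refl _) σ) _ _ (fun e' => ?_)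
    congr 1
  rw [Finset.sum_congr rfl (fun σ _ => h3 σ), Finset.sum_const, nsmul_eq_mul]
  rfl

lemma card_emb2 (d : ℕ) : (Fintype.card (Fin 2 ↪ Fin d) : ℝ) = d * (d - 1) := by
  rw [Fintype.card_embedding_eq]
  simp
  rcases d with _ | _ | d
  · simp
  · simp [Nat.descFactorial]
  · simp [Nat.descFactorial]; ring

lemma card_emb4 (d : ℕ) (hd : 4 ≤ d) : (Fintype.card (Fin 4 ↪ Fin d) : ℝ)
    = d * (d - 1) * (d - 2) * (d - 3) := by
  obtain ⟨m, rfl⟩ := Nat.exists_eq_add_of_le hd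
  rw [Fintype.card_embedding_eq]
  simp [Nat.descFactorial]
  rw [Nat.cast_sub (by omega), Nat.cast_sub (by omega)]
  push_cast; ring

def emb2 {α : Type*} (i j : α) (h : i ≠ j) : Fin 2 ↪ α :=
  ⟨![i, j], by
    intro a b
    fin_cases a <;> fin_cases b <;> simp [h, h.symm]⟩

def emb4 {α : Type*} (i j k l : α) (h1 : i ≠ j) (h2 : i ≠ k) (h3 : i ≠ l) (h4 : j ≠ k)
    (h5 : j ≠ l) (h6 : k ≠ l) : Fin 4 ↪ α :=
  ⟨![i, j, k, l], by
    intro a b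
    fin_cases a <;> fin_cases b <;> simp [h1, h1.symm, h2, h2.symm, h3, h3.symm, h4, h4.symm, h5, h5.symm, h6, h6.symm]⟩

lemma perm_avg2 {d : ℕ} (w : Fin d → Fin d → ℝ) (i j : Fin d) (h : i ≠ j) :
    (d * (d - 1) : ℝ) * ∑ σ : Equiv.Perm (Fin d), w (σ i) (σ j)
      = (Fintype.card (Equiv.Perm (Fin d)) : ℝ) * ∑ e : Fin 2 ↪ Fin d, w (e 0) (e 1) := by
  have := perm_avg (fun e : Fin 2 ↪ Fin d => w (e 0) (e 1)) (emb2 i j h)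
  rw [card_emb2] at this
  exact this

lemma perm_avg4 {d : ℕ} (hd : 4 ≤ d) (w : Fin d → Fin d → ℝ) (hw : ∀ a b, 0 ≤ w a b)
    (i j k l : Fin d) (h1 : i ≠ j) (h2 : i ≠ k) (h3 : i ≠ l) (h4 : j ≠ k)
    (h5 : j ≠ l) (h6 : k ≠ l) :
    (d * (d - 1) * (d - 2) * (d - 3) : ℝ) *
        ∑ σ : Equiv.Perm (Fin d), w (σ i) (σ j) * w (σ k) (σ l)
      ≤ (Fintype.card (Equiv.Perm (Fin d)) : ℝ) * (∑ e : Fin 2 ↪ Fin d, w (e 0) (e 1)) ^ 2 := by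
  have := perm_avg (fun e : Fin 4 ↪ Fin d => w (e 0) (e 1) * w (e 2) (e 3))
    (emb4 i j k l h1 h2 h3 h4 h5 h6)
  rw [card_emb4 d hd] at this
  refine (le_of_eq this).trans ?_
  apply mul_le_mul_of_nonneg_left _ (Nat.cast_nonneg _)
  rw [sq, Finset.sum_mul_sum, ← Finset.sum_product']
  let Φ : (Fin 4 ↪ Fin d) → (Fin 2 ↪ Fin d) × (Fin 2 ↪ Fin d) := fun e =>
    (emb2 (e 0) (e 1) (by simp), emb2 (e 2) (e 3) (by simp))
  have hΦ : Function.Injective Φ := by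
    intro e e' h
    have ha := congrArg (fun z => z.1) h
    have hb := congrArg (fun z => z.2) h
    have a0 := DFunLike.congr_fun ha 0
    have a1 := DFunLike.congr_fun ha 1
    have b0 := DFunLike.congr_fun hb 0
    have b1 := DFunLike.congr_fun hb 1
    ext m
    fin_cases m
    · exact congrArg Fin.val a0
    · exact congrArg Fin.val a1
    · exact congrArg Fin.val b0
    · exact congrArg Fin.val b1
  have e1 : ∑ e : Fin 4 ↪ Fin d, w (e 0) (e 1) * w (e 2) (e 3)
      = ∑ z ∈ univ.image Φ, w (z.1 0) (z.1 1) * w (z.2 0) (z.2 1) := by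
    rw [Finset.sum_image (fun a _ b _ h => hΦ h)]
    rfl
  rw [e1]
  apply Finset.sum_le_sum_of_subset_of_nonneg
  · intro z _; simp
  · intro z _ _; exact mul_nonneg (hw _ _) (hw _ _)

lemma prod_one_sub_le {ι : Type*} (T : Finset ι) (w : ι → ℝ) (h0 : ∀ i, 0 ≤ w i)
    (h1 : ∀ i, w i ≤ 1) : (∏ i ∈ T, (1 - w i)) * (1 + ∑ i ∈ T, w i) ≤ 1 := by
  classical
  induction T using Finset.induction_on with
  | empty => simp
  | insert a T ha ih =>
    rw [Finset.prod_insert ha, Finset.sum_insert ha]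
    have hP : 0 ≤ ∏ i ∈ T, (1 - w i) := Finset.prod_nonneg fun i _ => by linarith [h1 i]
    have hS : 0 ≤ ∑ i ∈ T, w i := Finset.sum_nonneg fun i _ => h0 i
    have : (1 - w a) * (1 + (w a + ∑ i ∈ T, w i)) ≤ 1 + ∑ i ∈ T, w i := by
      nlinarith [h0 a, h1 a, mul_nonneg (h0 a) hS, mul_nonneg (h0 a) (h0 a)]
    calc _ = (∏ i ∈ T, (1 - w i)) * ((1 - w a) * (1 + (w a + ∑ i ∈ T, w i))) := by ring
      _ ≤ (∏ i ∈ T, (1 - w i)) * (1 + ∑ i ∈ T, w i) := by gcongr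
      _ ≤ 1 := ih

/-- the swap trick -/
lemma swap_trick {d r : ℕ} (g : Fin d → Fin d → ℝ) (c : Fin d → ℝ) (i j : Fin r → Fin d)
    (hi : Function.Injective i) (hj : Function.Injective j) (hij : ∀ l m, i l ≠ j m)
    (hgi : ∀ l a, g (i l) a = 1) (hgj : ∀ l a, g (j l) a = c a) (T : Finset (Fin r)) :
    ∑ σ : Equiv.Perm (Fin d), ∏ a, g a (σ a)
      = ∑ σ : Equiv.Perm (Fin d), (∏ a ∈ univ \ (T.image i ∪ T.image j), g a (σ a)) *
          ∏ l ∈ T, ((c (σ (i l)) + c (σ (j l))) / 2) := by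
  induction T using Finset.induction_on with
  | empty => simp
  | insert l T hl ih =>
    rw [ih]
    set U := univ \ ((insert l T).image i ∪ (insert l T).image j) with hU
    have hne : i l ≠ j l := hij l l
    have hsplit : univ \ (T.image i ∪ T.image j) = insert (i l) (insert (j l) U) := by
      ext a
      simp only [hU, Finset.mem_sdiff, Finset.mem_univ, true_and, Finset.mem_union,
        Finset.mem_image, Finset.mem_insert]
      constructor
      · intro h
        by_cases h1 : a = i l
        · exact Or.inl h1
        by_cases h2 : a = j l
        · exact Or.inr (Or.inl h2)
        right; right
        rintro (⟨m, hm | hm, rfl⟩ | ⟨m, hm | hm, rfl⟩)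
        · exact h1 (by rw [hm])
        · exact h (Or.inl ⟨m, hm, rfl⟩)
        · exact h2 (by rw [hm])
        · exact h (Or.inr ⟨m, hm, rfl⟩)
      · rintro (rfl | rfl | h)
        · rintro (⟨m, hm, h⟩ | ⟨m, hm, h⟩)
          · exact hl (hi h ▸ hm)
          · exact hij l m h.symm
        · rintro (⟨m, hm, h⟩ | ⟨m, hm, h⟩)
          · exact hij m l h
          · exact hl (hj h ▸ hm)
        · rintro (⟨m, hm, h'⟩ | ⟨m, hm, h'⟩)
          · exact h (Or.inl ⟨m, Or.inr hm, h'⟩)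
          · exact h (Or.inr ⟨m, Or.inr hm, h'⟩)
    have hiU : i l ∉ insert (j l) U := by
      simp [hU, hne]
    have hjU : j l ∉ U := by
      simp [hU]
    set R : Equiv.Perm (Fin d) → ℝ := fun σ => (∏ a ∈ U, g a (σ a)) *
      ∏ m ∈ T, ((c (σ (i m)) + c (σ (j m))) / 2) with hR
    have hRinv : ∀ σ, R (σ * Equiv.swap (i l) (j l)) = R σ := by
      intro σ
      simp only [hR]
      congr 1
      · apply Finset.prod_congr rfl
        intro a ha
        have h1 : a ≠ i l := by rintro rfl; exact hiU (Finset.mem_insert_of_mem ha)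
        have h2 : a ≠ j l := by rintro rfl; exact hjU ha
        rw [Equiv.Perm.mul_apply, Equiv.swap_apply_of_ne_of_ne h1 h2]
      · apply Finset.prod_congr rfl
        intro m hm
        have hml : m ≠ l := by rintro rfl; exact hl hm
        rw [Equiv.Perm.mul_apply, Equiv.Perm.mul_apply,
          Equiv.swap_apply_of_ne_of_ne (fun h => hml (hi h)) (hij m l),
          Equiv.swap_apply_of_ne_of_ne (fun h => (hij l m) h.symm) (fun h => hml (hj h))]
    have e1 : ∀ σ : Equiv.Perm (Fin d), (∏ a ∈ univ \ (T.image i ∪ T.image j), g a (σ a)) *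
          ∏ m ∈ T, ((c (σ (i m)) + c (σ (j m))) / 2) = c (σ (j l)) * R σ := by
      intro σ
      rw [hsplit, Finset.prod_insert hiU, Finset.prod_insert hjU, hgi, hgj]
      simp only [hR]; ring
    have e2 : ∀ σ : Equiv.Perm (Fin d), (∏ a ∈ U, g a (σ a)) *
          ∏ m ∈ insert l T, ((c (σ (i m)) + c (σ (j m))) / 2)
          = (c (σ (i l)) * R σ + c (σ (j l)) * R σ) / 2 := by
      intro σ
      rw [Finset.prod_insert hl]
      simp only [hR]; ring
    rw [Finset.sum_congr rfl (fun σ _ => e1 σ), Finset.sum_congr rfl (fun σ _ => e2 σ)]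
    have e3 : ∑ σ : Equiv.Perm (Fin d), c (σ (i l)) * R σ
        = ∑ σ : Equiv.Perm (Fin d), c (σ (j l)) * R σ := by
      refine Fintype.sum_equiv (Equiv.mulRight (Equiv.swap (i l) (j l))) _ _ (fun σ => ?_)
      rw [Equiv.coe_mulRight, hRinv, Equiv.Perm.mul_apply, Equiv.swap_apply_right]
    rw [← Finset.sum_div, Finset.sum_add_distrib, e3]
    ring

end DF

namespace DF
open Finset

lemma sum_emb2 {d : ℕ} (w : Fin d → Fin d → ℝ) :
    ∑ e : Fin 2 ↪ Fin d, w (e 0) (e 1) = (∑ a, ∑ b, w a b) - ∑ a, w a a := by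
  have h1 : ∑ e : Fin 2 ↪ Fin d, w (e 0) (e 1)
      = ∑ z ∈ (univ : Finset (Fin d × Fin d)).filter (fun z => z.1 ≠ z.2), w z.1 z.2 := by
    refine Finset.sum_bij (fun e _ => (e 0, e 1)) ?_ ?_ ?_ ?_
    · intro e _; simp
    · intro e _ e' _ h
      simp only [Prod.mk.injEq] at h
      ext m
      fin_cases m
      · exact congrArg Fin.val h.1
      · exact congrArg Fin.val h.2
    · intro z hz
      simp only [Finset.mem_filter] at hz
      exact ⟨emb2 z.1 z.2 hz.2, Finset.mem_univ _, rfl⟩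
    · intro e _; rfl
  have h2 := Finset.sum_filter_add_sum_filter_not (univ : Finset (Fin d × Fin d))
    (fun z => z.1 ≠ z.2) (fun z => w z.1 z.2)
  have h3 : ∑ z ∈ (univ : Finset (Fin d × Fin d)).filter (fun z => ¬ z.1 ≠ z.2), w z.1 z.2
      = ∑ a, w a a := by
    symm
    refine Finset.sum_bij (fun a _ => (a, a)) ?_ ?_ ?_ ?_
    · intro a _; simp
    · intro a _ b _ h; exact (Prod.mk.inj h).1
    · rintro ⟨a, b⟩ hz
      simp at hz
      exact ⟨a, Finset.mem_univ _, by simp [hz]⟩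
    · intro a _; rfl
  rw [Fintype.sum_prod_type] at h2
  rw [h1, ← h3, ← h2]; ring

lemma W_lower {d : ℕ} (hd : 4 ≤ d) (c : Fin d → ℝ) (hc : ∀ a, |c a| ≤ 1) :
    (d * (d - 1) : ℝ) * (1 - ((∑ a, c a) / d) ^ 2) / 4 ≤
      ∑ e : Fin 2 ↪ Fin d, (1 - ((c (e 0) + c (e 1)) / 2) ^ 2) / 2 := by
  rw [sum_emb2 (fun a b => (1 - ((c a + c b) / 2) ^ 2) / 2)]
  have hd0 : (4 : ℝ) ≤ d := by exact_mod_cast hd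
  set S2 := ∑ a, (c a) ^ 2 with hS2
  set S1 := ∑ a, c a with hS1
  have e1 : ∑ a, ∑ b, (1 - ((c a + c b) / 2) ^ 2) / 2 = d ^ 2 / 2 - d * S2 / 4 - S1 ^ 2 / 4 := by
    have : ∀ a b, (1 - ((c a + c b) / 2) ^ 2) / 2
        = 1 / 2 - (c a) ^ 2 / 8 - (c b) ^ 2 / 8 - c a * c b / 4 := by intro a b; ring
    simp only [this, Finset.sum_sub_distrib, ← Finset.sum_div, ← Finset.mul_sum, ← Finset.sum_mul,
      Finset.sum_const, Finset.card_univ, Fintype.card_fin, nsmul_eq_mul, ← hS1, ← hS2]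
    ring
  have e2 : ∑ a, (1 - ((c a + c a) / 2) ^ 2) / 2 = d / 2 - S2 / 2 := by
    have : ∀ a, (1 - ((c a + c a) / 2) ^ 2) / 2 = 1 / 2 - (c a) ^ 2 / 2 := by intro a; ring
    simp only [this, Finset.sum_sub_distrib, ← Finset.sum_div, 
      Finset.sum_const, Finset.card_univ, Fintype.card_fin, nsmul_eq_mul, ← hS2]
    ring
  have hS2d : S2 ≤ d := by
    have : S2 ≤ ∑ _a : Fin d, (1 : ℝ) := Finset.sum_le_sum fun a _ => by
      have := (sq_le_one_iff_abs_le_one (c a)).2 (hc a); exact this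
    simpa using this
  have hκ : S1 ^ 2 = d ^ 2 * (S1 / d) ^ 2 := by
    field_simp
  have hk1 : S1 ^ 2 ≤ d ^ 2 := by
    have : |S1| ≤ d := (Finset.abs_sum_le_sum_abs _ _).trans (by
      have : ∑ a, |c a| ≤ ∑ _a : Fin d, (1 : ℝ) := Finset.sum_le_sum fun a _ => hc a
      simpa using this)
    rw [← sq_abs]
    exact pow_le_pow_left₀ (abs_nonneg _) this 2
  have hk2 : (S1 / d) ^ 2 ≤ 1 := by
    rw [div_pow, div_le_one (by positivity)]; exact hk1
  rw [e1, e2, hκ]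
  generalize (S1 / d) ^ 2 = k at *
  nlinarith [mul_nonneg (sub_nonneg.2 hS2d) (by linarith : (0:ℝ) ≤ d - 2)]

lemma inv_taylor {X μ : ℝ} (hX : 0 ≤ X) (hμ : 0 ≤ μ) :
    (1 + μ) ^ 2 * (1 / (1 + X)) ≤ (1 + μ) - (X - μ) + (X - μ) ^ 2 := by
  rw [mul_one_div, div_le_iff₀ (by positivity)]
  nlinarith [mul_nonneg hX (sq_nonneg (X - μ))]

set_option maxHeartbeats 1000000 in
lemma perm_decay {d r : ℕ} (hd : 4 ≤ d) (g : Fin d → Fin d → ℝ) (hg : ∀ a b, |g a b| ≤ 1)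
    (c : Fin d → ℝ) (hc : ∀ a, |c a| ≤ 1) (i j : Fin r → Fin d)
    (hi : Function.Injective i) (hj : Function.Injective j) (hij : ∀ l m, i l ≠ j m)
    (hgi : ∀ l a, g (i l) a = 1) (hgj : ∀ l a, g (j l) a = c a) :
    |∑ σ : Equiv.Perm (Fin d), ∏ a, g a (σ a)| * ((r + 1) * (1 - ((∑ a, c a) / d) ^ 2))
      ≤ 28 * Fintype.card (Equiv.Perm (Fin d)) := by
  have hd0 : (4 : ℝ) ≤ d := by exact_mod_cast hd
  set k := 1 - ((∑ a, c a) / d) ^ 2 with hk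
  have hP0' : (0 : ℝ) < (Fintype.card (Equiv.Perm (Fin d)) : ℝ) := by
    exact_mod_cast Fintype.card_pos
  obtain ⟨P, hP⟩ : ∃ P : ℝ, P = (Fintype.card (Equiv.Perm (Fin d)) : ℝ) := ⟨_, rfl⟩
  have hP0 : 0 < P := by rw [hP]; exact hP0'
  rw [← hP]
  set w : Fin d → Fin d → ℝ := fun a b => (1 - ((c a + c b) / 2) ^ 2) / 2 with hw
  have hv : ∀ a b, ((c a + c b) / 2) ^ 2 ≤ 1 := by
    intro a b
    have h1 := abs_le.1 (hc a); have h2 := abs_le.1 (hc b)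
    rw [sq_le_one_iff_abs_le_one, abs_le]; constructor <;> linarith
  have hw0 : ∀ a b, 0 ≤ w a b := fun a b => by simp only [hw]; linarith [hv a b]
  have hw1 : ∀ a b, w a b ≤ 1 / 2 := fun a b => by
    simp only [hw]; linarith [sq_nonneg ((c a + c b) / 2)]
  set W := ∑ e : Fin 2 ↪ Fin d, w (e 0) (e 1) with hW
  have hWl : (d * (d - 1) : ℝ) * k / 4 ≤ W := W_lower hd c hc
  have hWu : W ≤ (d * (d - 1) : ℝ) / 2 := by
    rw [← card_emb2]
    have : W ≤ ∑ _e : Fin 2 ↪ Fin d, (1 / 2 : ℝ) := Finset.sum_le_sum fun e _ => hw1 _ _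
    refine this.trans (le_of_eq ?_)
    rw [Finset.sum_const, nsmul_eq_mul, Finset.card_univ]; ring
  have hW0 : 0 ≤ W := Finset.sum_nonneg fun e _ => hw0 _ _
  set wb := W / (d * (d - 1) : ℝ) with hwb
  have hdd : (0 : ℝ) < d * (d - 1) := by nlinarith
  have hdd4 : (0 : ℝ) < (d - 2) * (d - 3) := by nlinarith
  have hWe : W = wb * (d * (d - 1)) := by rw [hwb, div_mul_cancel₀ _ hdd.ne']
  have hwb0 : 0 ≤ wb := by rw [hwb]; positivity
  have hwbl : k / 4 ≤ wb := by rw [hwb, le_div_iff₀ hdd]; linarith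
  have hwbu : wb ≤ 1 / 2 := by rw [hwb, div_le_iff₀ hdd]; linarith
  clear_value wb k
  have hr : (2 * r : ℝ) ≤ d := by
    have : (univ.image i ∪ univ.image j).card = 2 * r := by
      rw [Finset.card_union_of_disjoint, Finset.card_image_of_injective _ hi,
        Finset.card_image_of_injective _ hj]
      · simp; ring
      · rw [Finset.disjoint_left]
        intro a h1 h2
        simp at h1 h2
        obtain ⟨l, rfl⟩ := h1; obtain ⟨m, hm⟩ := h2
        exact hij l m hm.symm
    have h2 := Finset.card_le_univ (univ.image i ∪ univ.image j)
    rw [this, Fintype.card_fin] at h2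
    exact_mod_cast h2
  set X : Equiv.Perm (Fin d) → ℝ := fun σ => ∑ l : Fin r, w (σ (i l)) (σ (j l)) with hX
  have hX0 : ∀ σ, 0 ≤ X σ := fun σ => Finset.sum_nonneg fun l _ => hw0 _ _
  set μ := r * wb with hμ
  have hμ0 : 0 ≤ μ := mul_nonneg (Nat.cast_nonneg r) hwb0
  clear_value μ
  -- first moment
  have m1' : ∀ a b : Fin d, a ≠ b → ∑ σ : Equiv.Perm (Fin d), w (σ a) (σ b) = P * wb := by
    intro a b hab
    have := perm_avg2 w a b hab
    rw [← hP, ← hW, hWe] at this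
    have h2 : (d * (d - 1) : ℝ) * (∑ σ : Equiv.Perm (Fin d), w (σ a) (σ b))
      = (d * (d - 1) : ℝ) * (P * wb) := by rw [this]; ring
    exact mul_left_cancel₀ hdd.ne' h2
  have m1 : ∑ σ, X σ = P * μ := by
    simp only [hX]
    rw [Finset.sum_comm, Finset.sum_congr rfl (fun l _ => m1' _ _ (hij l l))]
    simp [hμ]; ring
  -- second moment
  have m2' : ∀ l m : Fin r, ∑ σ : Equiv.Perm (Fin d), w (σ (i l)) (σ (j l)) * w (σ (i m)) (σ (j m))
      ≤ (if l = m then P * wb else 0) + P * wb ^ 2 * (d * (d - 1) / ((d - 2) * (d - 3))) := by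
    intro l m
    have hnn : 0 ≤ P * wb ^ 2 * (d * (d - 1) / ((d - 2) * (d - 3))) := by positivity
    split_ifs with h
    · subst h
      rw [← m1' _ _ (hij l l)]
      have : ∑ σ : Equiv.Perm (Fin d), w (σ (i l)) (σ (j l)) * w (σ (i l)) (σ (j l))
        ≤ ∑ σ : Equiv.Perm (Fin d), w (σ (i l)) (σ (j l)) := Finset.sum_le_sum fun σ _ => by
          nlinarith [hw0 (σ (i l)) (σ (j l)), hw1 (σ (i l)) (σ (j l))]
      linarith
    · rw [zero_add]
      have := perm_avg4 hd w hw0 (i l) (j l) (i m) (j m) (hij l l) (fun e => h (hi e)) (hij l m)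
        (fun e => hij m l e.symm) (fun e => h (hj e)) (hij m m)
      rw [← hP, ← hW, hWe] at this
      have e : P * wb ^ 2 * (d * (d - 1) / ((d - 2) * (d - 3)))
        = (P * (wb * (d * (d - 1))) ^ 2) / (d * (d - 1) * (d - 2) * (d - 3)) := by
        have : (d : ℝ) ≠ 0 := by linarith
        have : (d : ℝ) - 1 ≠ 0 := by linarith
        have : (d : ℝ) - 2 ≠ 0 := by linarith
        have : (d : ℝ) - 3 ≠ 0 := by linarith
        field_simp
      rw [e, le_div_iff₀ (by nlinarith [mul_pos hdd hdd4])]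
      linarith
  have m2 : ∑ σ, X σ ^ 2 ≤ P * μ + P * μ ^ 2 * (d * (d - 1) / ((d - 2) * (d - 3))) := by
    have : ∀ σ, X σ ^ 2 = ∑ l, ∑ m, w (σ (i l)) (σ (j l)) * w (σ (i m)) (σ (j m)) := by
      intro σ; simp only [hX]; rw [sq, Finset.sum_mul_sum]
    simp only [this]
    rw [Finset.sum_comm]
    have h3 : ∀ l : Fin r, ∑ σ : Equiv.Perm (Fin d), ∑ m, w (σ (i l)) (σ (j l)) * w (σ (i m)) (σ (j m))
        ≤ ∑ m : Fin r, ((if l = m then P * wb else 0) + P * wb ^ 2 * (d * (d - 1) / ((d - 2) * (d - 3)))) := by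
      intro l
      rw [Finset.sum_comm]
      exact Finset.sum_le_sum fun m _ => m2' l m
    refine (Finset.sum_le_sum fun l _ => h3 l).trans (le_of_eq ?_)
    simp only [Finset.sum_add_distrib, Finset.sum_ite_eq, Finset.mem_univ, if_true,
      Finset.sum_const, Finset.card_univ, Fintype.card_fin, nsmul_eq_mul, hμ]
    ring
  have hcoef : (d * (d - 1) / ((d - 2) * (d - 3)) : ℝ) - 1 = (4 * d - 6) / ((d - 2) * (d - 3)) := by
    rw [div_sub_one hdd4.ne']; congr 1; ring
  have hcoef2 : μ * ((4 * d - 6) / ((d - 2) * (d - 3))) ≤ 5 := by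
    rw [mul_div_assoc', div_le_iff₀ hdd4]
    have : μ ≤ d / 4 := by
      rw [hμ]
      calc (r : ℝ) * wb ≤ r * (1 / 2) := by gcongr
        _ ≤ d / 4 := by linarith
    have h5 : μ * (4 * d - 6) ≤ d / 4 * (4 * d - 6) := by
      apply mul_le_mul_of_nonneg_right this; linarith
    have h6 : (0:ℝ) ≤ (d - 4) * (16 * d - 30) := mul_nonneg (by linarith) (by linarith)
    nlinarith
  have var : ∑ σ, (X σ - μ) ^ 2 ≤ 6 * P * μ := by
    have : ∀ σ, (X σ - μ) ^ 2 = X σ ^ 2 - 2 * μ * X σ + μ ^ 2 := fun σ => by ring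
    simp only [this, Finset.sum_add_distrib, Finset.sum_sub_distrib, ← Finset.mul_sum, m1]
    rw [Finset.sum_const, nsmul_eq_mul, Finset.card_univ, ← hP]
    have : P * μ ^ 2 * (d * (d - 1) / ((d - 2) * (d - 3)))
      = P * μ ^ 2 + P * μ * (μ * ((4 * d - 6) / ((d - 2) * (d - 3)))) := by
      rw [← hcoef]; ring
    have h7 : P * μ * (μ * ((4 * d - 6) / ((d - 2) * (d - 3)))) ≤ P * μ * 5 := by gcongr
    nlinarith
  have key : ∑ σ, 1 / (1 + X σ) ≤ 7 * P / (1 + μ) := by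
    have h8 : (1 + μ) ^ 2 * ∑ σ, 1 / (1 + X σ) ≤ ∑ σ, ((1 + μ) - (X σ - μ) + (X σ - μ) ^ 2) := by
      rw [Finset.mul_sum]
      exact Finset.sum_le_sum fun σ _ => inv_taylor (hX0 σ) hμ0
    have h9 : ∑ σ, ((1 + μ) - (X σ - μ) + (X σ - μ) ^ 2) ≤ 7 * P * (1 + μ) := by
      simp only [Finset.sum_add_distrib, Finset.sum_sub_distrib, m1,
        Finset.sum_const, nsmul_eq_mul, Finset.card_univ, ← hP]
      nlinarith
    rw [le_div_iff₀ (by positivity)]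
    have h10 := h8.trans h9
    have : (1 + μ) * ((∑ σ, 1 / (1 + X σ)) * (1 + μ)) ≤ (1 + μ) * (7 * P) := by nlinarith
    exact le_of_mul_le_mul_left this (by positivity)
  have main : |∑ σ : Equiv.Perm (Fin d), ∏ a, g a (σ a)| ≤ ∑ σ, 1 / (1 + X σ) := by
    rw [swap_trick g c i j hi hj hij hgi hgj univ]
    refine (Finset.abs_sum_le_sum_abs _ _).trans (Finset.sum_le_sum fun σ _ => ?_)
    rw [abs_mul]
    have h1 : |∏ a ∈ univ \ (univ.image i ∪ univ.image j), g a (σ a)| ≤ 1 := by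
      rw [Finset.abs_prod]
      exact Finset.prod_le_one (fun _ _ => abs_nonneg _) (fun _ _ => hg _ _)
    have h2 : |∏ l, ((c (σ (i l)) + c (σ (j l))) / 2)| ≤ ∏ l, (1 - w (σ (i l)) (σ (j l))) := by
      rw [Finset.abs_prod]
      refine Finset.prod_le_prod (fun _ _ => abs_nonneg _) (fun l _ => ?_)
      simp only [hw]
      rw [← sq_abs ((c (σ (i l)) + c (σ (j l))) / 2)]
      nlinarith [sq_nonneg (|(c (σ (i l)) + c (σ (j l))) / 2| - 1)]
    have h3 : ∏ l, (1 - w (σ (i l)) (σ (j l))) ≤ 1 / (1 + X σ) := by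
      rw [le_div_iff₀ (by linarith [hX0 σ])]
      exact prod_one_sub_le univ (fun l => w (σ (i l)) (σ (j l))) (fun _ => hw0 _ _)
        (fun _ => by linarith [hw1 (σ (i ‹_›)) (σ (j ‹_›))])
    calc _ ≤ 1 * |∏ l, ((c (σ (i l)) + c (σ (j l))) / 2)| := by gcongr
      _ ≤ _ := by rw [one_mul]; exact h2.trans h3
  have hk1 : k ≤ 1 := by rw [hk]; linarith [sq_nonneg ((∑ a, c a) / d)]
  have h11 : |∑ σ : Equiv.Perm (Fin d), ∏ a, g a (σ a)| * (1 + μ) ≤ 7 * P := by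
    rw [← le_div_iff₀ (by positivity)]; exact main.trans key
  have h12 : (r + 1) * k ≤ 4 * (1 + μ) := by
    have : (r:ℝ) * (k / 4) ≤ μ := by rw [hμ]; gcongr
    linarith
  calc _ ≤ |∑ σ : Equiv.Perm (Fin d), ∏ a, g a (σ a)| * (4 * (1 + μ)) := by gcongr
    _ ≤ 28 * P := by linarith

end DF

namespace DF
open Finset

noncomputable def mult (q : ℝ) (d : ℕ) (t : ℝ) (θ : Fin d → ℝ) : ℝ :=
  ((latticeBall q d t).card : ℝ)⁻¹ * ∑ x ∈ latticeBall q d t, ∏ i, Real.cos (x i * θ i)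

noncomputable def kap {d : ℕ} (θ : Fin d → ℝ) : ℝ := (∑ i, Real.cos (θ i)) / d

lemma ball_zero_mem {q : ℝ} (hq : 1 ≤ q) {d : ℕ} {t : ℝ} (ht : 0 ≤ t) :
    (0 : Fin d → ℤ) ∈ latticeBall q d t := by
  rw [mem_ball hq ht]
  have : en q (0 : Fin d → ℤ) = 0 := by
    unfold en
    exact Finset.sum_eq_zero fun i _ => zero_rpow_abs hq
  rw [this]; positivity

lemma ball_card_pos {q : ℝ} (hq : 1 ≤ q) {d : ℕ} {t : ℝ} (ht : 0 ≤ t) :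
    (0 : ℝ) < ((latticeBall q d t).card : ℝ) := by
  exact_mod_cast Finset.card_pos.2 ⟨0, ball_zero_mem hq ht⟩

lemma abs_sin_nat_mul (k : ℕ) (y : ℝ) : |Real.sin (k * y)| ≤ k * |Real.sin y| := by
  induction k with
  | zero => simp
  | succ k ih =>
    have : ((k + 1 : ℕ) : ℝ) * y = k * y + y := by push_cast; ring
    rw [this, Real.sin_add]
    refine (abs_add_le _ _).trans ?_
    rw [abs_mul, abs_mul]
    have h1 := Real.abs_cos_le_one y
    have h2 := Real.abs_cos_le_one (k * y)
    push_cast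
    have h3 := abs_nonneg (Real.sin y)
    have h4 := abs_nonneg (Real.sin (k * y))
    nlinarith

lemma one_sub_cos_int (k : ℤ) (y : ℝ) :
    1 - Real.cos (k * y) ≤ (k : ℝ) ^ 2 * (1 - Real.cos y) := by
  have e : ∀ z : ℝ, 1 - Real.cos z = 2 * Real.sin (z / 2) ^ 2 := by
    intro z
    have h := Real.cos_two_mul (z / 2)
    rw [show 2 * (z / 2) = z by ring] at h
    have h2 := Real.sin_sq_add_cos_sq (z / 2)
    linarith
  rw [e, e]
  have h : |Real.sin (k * y / 2)| ≤ |(k : ℝ)| * |Real.sin (y / 2)| := by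
    have := abs_sin_nat_mul k.natAbs (y / 2)
    rw [Nat.cast_natAbs, Int.cast_abs] at this
    rcases abs_choice (k : ℝ) with h | h
    · rw [h] at this ⊢; rwa [show (k : ℝ) * y / 2 = k * (y / 2) by ring]
    · rw [h] at this ⊢
      rw [show (k : ℝ) * y / 2 = -((-k) * (y / 2)) by ring, Real.sin_neg, abs_neg]; exact this
  have h2 : Real.sin (k * y / 2) ^ 2 ≤ (k : ℝ) ^ 2 * Real.sin (y / 2) ^ 2 := by
    rw [← sq_abs, ← sq_abs (k : ℝ), ← sq_abs (Real.sin (y / 2)), ← mul_pow]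
    exact pow_le_pow_left₀ (abs_nonneg _) h 2
  linarith

lemma one_sub_prod {ι : Type*} (T : Finset ι) (c : ι → ℝ) (hc : ∀ i, |c i| ≤ 1) :
    |1 - ∏ i ∈ T, c i| ≤ ∑ i ∈ T, (1 - c i) := by
  classical
  induction T using Finset.induction_on with
  | empty => simp
  | insert a T ha ih =>
    rw [Finset.prod_insert ha, Finset.sum_insert ha]
    have h1 := abs_le.1 (hc a)
    have : 1 - c a * ∏ i ∈ T, c i = (1 - c a) + c a * (1 - ∏ i ∈ T, c i) := by ring
    rw [this]
    refine (abs_add_le _ _).trans ?_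
    rw [abs_mul, abs_of_nonneg (by linarith : 0 ≤ 1 - c a)]
    have := mul_le_mul (hc a) ih (abs_nonneg _) zero_le_one
    linarith

lemma abs_prod_cos {d : ℕ} (x : Fin d → ℤ) (θ : Fin d → ℝ) :
    |∏ i, Real.cos (x i * θ i)| ≤ 1 := by
  rw [Finset.abs_prod]
  exact Finset.prod_le_one (fun _ _ => abs_nonneg _) (fun _ _ => Real.abs_cos_le_one _)

lemma mult_abs_le {q : ℝ} (hq : 1 ≤ q) {d : ℕ} {t : ℝ} (ht : 0 ≤ t) (θ : Fin d → ℝ) :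
    |mult q d t θ| ≤ 1 := by
  have hp := ball_card_pos hq (d := d) ht
  unfold mult
  rw [abs_mul, abs_inv, abs_of_pos hp, inv_mul_le_iff₀ hp, mul_one]
  refine (Finset.abs_sum_le_sum_abs _ _).trans ?_
  refine (Finset.sum_le_sum fun x _ => abs_prod_cos x θ).trans ?_
  simp

lemma kap_sum {d : ℕ} (hd : 0 < d) (θ : Fin d → ℝ) :
    ∑ i, (1 - Real.cos (θ i)) = d * (1 - kap θ) := by
  have : (d : ℝ) ≠ 0 := by positivity
  rw [Finset.sum_sub_distrib, kap]
  simp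
  field_simp

lemma avg_energy {q : ℝ} (hq : 1 ≤ q) {d : ℕ} {t : ℝ} (ht : 1 ≤ t) (hd : 4 * t ^ q ≤ d)
    (θ : Fin d → ℝ) :
    ∑ x ∈ latticeBall q d t, |1 - ∏ i, Real.cos (x i * θ i)|
      ≤ (latticeBall q d t).card * (16 * t ^ q * (1 - kap θ)) := by
  have hN : 1 ≤ t ^ q := Real.one_le_rpow ht (by linarith)
  have hd0 : (0 : ℝ) < d := by linarith
  have hdn : 0 < d := by exact_mod_cast hd0
  have h1 : ∑ x ∈ latticeBall q d t, |1 - ∏ i, Real.cos (x i * θ i)|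
      ≤ ∑ x ∈ latticeBall q d t, ∑ i, (x i : ℝ) ^ 2 * (1 - Real.cos (θ i)) := by
    refine Finset.sum_le_sum fun x _ => ?_
    refine (one_sub_prod univ _ (fun i => Real.abs_cos_le_one _)).trans ?_
    exact Finset.sum_le_sum fun i _ => one_sub_cos_int _ _
  refine h1.trans ?_
  rw [Finset.sum_comm]
  have h2 : ∀ i : Fin d, ∑ x ∈ latticeBall q d t, (x i : ℝ) ^ 2 * (1 - Real.cos (θ i))
      ≤ (16 * t ^ q * (latticeBall q d t).card / d) * (1 - Real.cos (θ i)) := by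
    intro i
    rw [← Finset.sum_mul]
    apply mul_le_mul_of_nonneg_right _ (by linarith [Real.cos_le_one (θ i)])
    rw [le_div_iff₀ hd0]
    have := second_moment hq ht hd i
    linarith
  refine (Finset.sum_le_sum fun i _ => h2 i).trans (le_of_eq ?_)
  rw [← Finset.mul_sum, kap_sum hdn]
  field_simp

lemma mult_near_one {q : ℝ} (hq : 1 ≤ q) {d : ℕ} {t : ℝ} (ht : 1 ≤ t) (hd : 4 * t ^ q ≤ d)
    (θ : Fin d → ℝ) : |1 - mult q d t θ| ≤ 16 * t ^ q * (1 - kap θ) := by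
  have hp := ball_card_pos hq (d := d) (by linarith : 0 ≤ t)
  have e : 1 - mult q d t θ = ((latticeBall q d t).card : ℝ)⁻¹ *
      ∑ x ∈ latticeBall q d t, (1 - ∏ i, Real.cos (x i * θ i)) := by
    rw [Finset.sum_sub_distrib, mul_sub, mult]
    simp [hp.ne']
  rw [e, abs_mul, abs_inv, abs_of_pos hp, inv_mul_le_iff₀ hp]
  exact (Finset.abs_sum_le_sum_abs _ _).trans (avg_energy hq ht hd θ)

lemma mult_near_sign {q : ℝ} (hq : 1 ≤ q) {d : ℕ} {t : ℝ} (ht : 1 ≤ t) (hd : 4 * t ^ q ≤ d)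
    (θ : Fin d → ℝ) :
    |mult q d t (fun _ => Real.pi) - mult q d t θ| ≤ 16 * t ^ q * (1 + kap θ) := by
  have hp := ball_card_pos hq (d := d) (by linarith : 0 ≤ t)
  have hk : 1 + kap θ = 1 - kap (fun i => θ i - Real.pi) := by
    simp [kap, Real.cos_sub_pi]; ring
  have hc : ∀ (k : ℤ) (y : ℝ), Real.cos (k * y)
      = Real.cos (k * Real.pi) * Real.cos (k * (y - Real.pi)) := by
    intro k y
    have : (k : ℝ) * y = k * Real.pi + k * (y - Real.pi) := by ring
    rw [this, Real.cos_add, Real.sin_int_mul_pi]; ring_nf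
  have e : mult q d t (fun _ => Real.pi) - mult q d t θ = ((latticeBall q d t).card : ℝ)⁻¹ *
      ∑ x ∈ latticeBall q d t, (∏ i, Real.cos (x i * Real.pi)) *
        (1 - ∏ i, Real.cos (x i * (θ i - Real.pi))) := by
    rw [mult, mult, ← mul_sub, ← Finset.sum_sub_distrib]
    congr 1
    refine Finset.sum_congr rfl fun x _ => ?_
    rw [mul_sub, mul_one, ← Finset.prod_mul_distrib]
    congr 1
    exact Finset.prod_congr rfl fun i _ => hc _ _
  rw [e, abs_mul, abs_inv, abs_of_pos hp, inv_mul_le_iff₀ hp, hk]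
  refine le_trans ?_ (avg_energy hq ht hd (fun i => θ i - Real.pi))
  refine (Finset.abs_sum_le_sum_abs _ _).trans (Finset.sum_le_sum fun x _ => ?_)
  rw [abs_mul]
  have := mul_le_mul_of_nonneg_right (abs_prod_cos x (fun _ => Real.pi))
    (abs_nonneg (1 - ∏ i, Real.cos (x i * (θ i - Real.pi))))
  simpa using this

lemma en_comp (q : ℝ) {d : ℕ} (x : Fin d → ℤ) (σ : Equiv.Perm (Fin d)) :
    en q (x ∘ σ) = en q x := by
  unfold en
  exact Equiv.sum_comp σ (fun i => |(x i : ℝ)| ^ q)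

lemma perm_ball {q : ℝ} (hq : 1 ≤ q) {d : ℕ} {t : ℝ} (ht : 0 ≤ t) (θ : Fin d → ℝ)
    (σ : Equiv.Perm (Fin d)) :
    ∑ x ∈ latticeBall q d t, ∏ i, Real.cos (x i * θ (σ i))
      = ∑ x ∈ latticeBall q d t, ∏ i, Real.cos (x i * θ i) := by
  refine Finset.sum_bij' (fun x _ => x ∘ σ.symm) (fun x _ => x ∘ σ) ?_ ?_ ?_ ?_ ?_
  · intro x hx; rw [mem_ball hq ht] at hx ⊢; rwa [en_comp]
  · intro x hx; rw [mem_ball hq ht] at hx ⊢; rwa [en_comp]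
  · intro x _; ext i; simp
  · intro x _; ext i; simp
  · intro x _
    rw [← Equiv.prod_comp σ (fun i => Real.cos (((x ∘ σ.symm) i : ℤ) * θ i))]
    simp

lemma x_decay {q : ℝ} (hq : 1 ≤ q) {d : ℕ} {t : ℝ} (ht : 1 ≤ t) (hd : 4 * t ^ q ≤ d)
    (θ : Fin d → ℝ) (x : Fin d → ℤ) (hx : x ∈ latticeBall q d t) :
    |∑ σ : Equiv.Perm (Fin d), ∏ a, Real.cos (x a * θ (σ a))| * (1 - (kap θ) ^ 2)
      ≤ 28 * Fintype.card (Equiv.Perm (Fin d)) * (1 / ((on x : ℝ) + 1)) := by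
  classical
  have hN : 1 ≤ t ^ q := Real.one_le_rpow ht (by linarith)
  have hd4 : 4 ≤ d := by
    have : (4 : ℝ) ≤ d := by linarith
    exact_mod_cast this
  rw [mem_ball hq (by linarith)] at hx
  have hon := (on_le hq x).trans hx
  have hnz := (nonzero_le hq x).trans hx
  set O := univ.filter fun i => |x i| = 1 with hO
  set Z := univ.filter fun i => x i = 0 with hZ
  have hOc : O.card = on x := rfl
  have hZc : on x ≤ Z.card := by
    have h1 := Finset.card_filter_add_card_filter_not (s := (univ : Finset (Fin d))) (fun i => x i = 0)
    rw [← hZ, Finset.card_univ, Fintype.card_fin] at h1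
    have h2 : (Z.card : ℝ) + ((univ.filter fun i => ¬ x i = 0).card : ℝ) = d := by exact_mod_cast h1
    have h3 : ((univ.filter fun i => ¬ x i = 0).card : ℝ) ≤ t ^ q := hnz
    have : (on x : ℝ) ≤ Z.card := by linarith
    exact_mod_cast this
  obtain ⟨Z', hZ', hZ'c⟩ := Finset.exists_subset_card_eq hZc
  let i : Fin (on x) → Fin d := fun l => (Z'.equivFinOfCardEq hZ'c).symm l
  let j : Fin (on x) → Fin d := fun l => (O.equivFinOfCardEq hOc).symm l
  have hi0 : ∀ l, x (i l) = 0 := fun l => by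
    have := hZ' ((Z'.equivFinOfCardEq hZ'c).symm l).2
    rw [hZ, Finset.mem_filter] at this; exact this.2
  have hj1 : ∀ l, |x (j l)| = 1 := fun l => by
    exact (Finset.mem_filter.1 ((O.equivFinOfCardEq hOc).symm l).2).2
  have key := perm_decay hd4 (fun a b => Real.cos (x a * θ b)) (fun _ _ => Real.abs_cos_le_one _)
    (fun b => Real.cos (θ b)) (fun _ => Real.abs_cos_le_one _) i j
    (fun l m h => (Z'.equivFinOfCardEq hZ'c).symm.injective (Subtype.ext h))
    (fun l m h => (O.equivFinOfCardEq hOc).symm.injective (Subtype.ext h))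
    (fun l m h => by have h1 := hj1 m; rw [← h, hi0] at h1; simp at h1)
    (fun l a => by simp [hi0])
    (fun l a => by
      rcases abs_eq (zero_le_one' ℤ) |>.1 (hj1 l) with h | h <;> simp [h])
  have hpos : (0 : ℝ) < (on x : ℝ) + 1 := by positivity
  rw [mul_one_div, le_div_iff₀ hpos]
  have : ((∑ a, Real.cos (θ a)) / d) = kap θ := rfl
  rw [this] at key
  linarith

lemma mult_decay {q : ℝ} (hq : 1 ≤ q) {d : ℕ} {t : ℝ} (ht : 1 ≤ t) (hd : 4 * t ^ q ≤ d)
    (θ : Fin d → ℝ) : |mult q d t θ| * (t ^ q * (1 - (kap θ) ^ 2)) ≤ 4088 := by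
  have ht0 : 0 ≤ t := by linarith
  have hp := ball_card_pos hq (d := d) ht0
  have hN : 1 ≤ t ^ q := Real.one_le_rpow ht (by linarith)
  have hP0 : (0 : ℝ) < (Fintype.card (Equiv.Perm (Fin d)) : ℝ) := by
    exact_mod_cast Fintype.card_pos
  obtain ⟨P, hP⟩ : ∃ P : ℝ, P = (Fintype.card (Equiv.Perm (Fin d)) : ℝ) := ⟨_, rfl⟩
  rw [← hP] at hP0
  set S := ∑ x ∈ latticeBall q d t, ∏ i, Real.cos (x i * θ i) with hS
  have h1 : P * S = ∑ x ∈ latticeBall q d t, ∑ σ : Equiv.Perm (Fin d),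
      ∏ a, Real.cos (x a * θ (σ a)) := by
    rw [Finset.sum_comm, Finset.sum_congr rfl (fun σ _ => perm_ball hq ht0 θ σ), Finset.sum_const,
      nsmul_eq_mul, Finset.card_univ, hP]
  have hk : 0 ≤ 1 - (kap θ) ^ 2 := by
    have hd0 : (0 : ℝ) < d := by linarith
    have : |kap θ| ≤ 1 := by
      rw [kap, abs_div, abs_of_pos hd0, div_le_one hd0]
      refine (Finset.abs_sum_le_sum_abs _ _).trans ?_
      refine (Finset.sum_le_sum fun x _ => Real.abs_cos_le_one _).trans ?_
      simp
    have := (sq_le_one_iff_abs_le_one (kap θ)).2 this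
    linarith
  have h2 : P * |S| * (1 - (kap θ) ^ 2)
      ≤ 28 * P * ∑ x ∈ latticeBall q d t, 1 / ((on x : ℝ) + 1) := by
    rw [show P * |S| = |P * S| by rw [abs_mul, abs_of_pos hP0], h1]
    calc _ ≤ (∑ x ∈ latticeBall q d t, |∑ σ : Equiv.Perm (Fin d),
      ∏ a, Real.cos (x a * θ (σ a))|) * (1 - (kap θ) ^ 2) := by
          gcongr; exact Finset.abs_sum_le_sum_abs _ _
      _ ≤ _ := by
        rw [Finset.sum_mul, Finset.mul_sum]
        refine Finset.sum_le_sum fun x hx => ?_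
        rw [hP]
        exact x_decay hq ht hd θ x hx
  have h3 := inv_on_moment hq ht hd
  have h4 : |S| * (1 - (kap θ) ^ 2) ≤ 28 * ∑ x ∈ latticeBall q d t, 1 / ((on x : ℝ) + 1) := by
    refine le_of_mul_le_mul_left ?_ hP0
    linarith
  have h5 : |S| * (1 - (kap θ) ^ 2) * t ^ q ≤ 4088 * (latticeBall q d t).card := by
    calc _ ≤ (28 * ∑ x ∈ latticeBall q d t, 1 / ((on x : ℝ) + 1)) * t ^ q := by gcongr
      _ ≤ _ := by linarith
  rw [mult, ← hS, abs_mul, abs_inv, abs_of_pos hp]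
  rw [mul_assoc, inv_mul_le_iff₀ hp]
  linarith

lemma sign_sum {q : ℝ} (hq : 1 ≤ q) {d : ℕ} {t : ℝ} (ht : 0 ≤ t) (θ : Fin d → ℝ) :
    ((latticeBall q d t).card : ℂ)⁻¹ *
      ∑ x ∈ latticeBall q d t, ∏ i, Complex.exp (x i * θ i * Complex.I) = (mult q d t θ : ℂ) := by
  have h1 : ∀ ε : Fin d → ℤˣ, ∑ x ∈ latticeBall q d t, ∏ i, Complex.exp (x i * θ i * Complex.I)
      = ∑ x ∈ latticeBall q d t, ∏ i, Complex.exp (((ε i : ℤ) * x i : ℤ) * θ i * Complex.I) := by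
    intro ε
    have hm : ∀ x ∈ latticeBall q d t, (fun i => (ε i : ℤ) * x i) ∈ latticeBall q d t := by
      intro x hx
      rw [mem_ball hq ht] at hx ⊢
      convert hx using 1
      unfold en
      refine Finset.sum_congr rfl fun i _ => ?_
      rcases Int.units_eq_one_or (ε i) with h | h <;> simp [h]
    have hi : ∀ x : Fin d → ℤ, (fun i => (ε i : ℤ) * ((ε i : ℤ) * x i)) = x := by
      intro x; ext i
      rcases Int.units_eq_one_or (ε i) with h | h <;> simp [h]
    refine Finset.sum_bij' (fun x _ => fun i => (ε i : ℤ) * x i) (fun x _ => fun i => (ε i : ℤ) * x i)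
      hm hm (fun x _ => hi x) (fun x _ => hi x) ?_
    intro x _
    refine Finset.prod_congr rfl fun i _ => ?_
    rcases Int.units_eq_one_or (ε i) with h | h <;> simp [h]
  have h2 : ((2 : ℂ) ^ d) * ∑ x ∈ latticeBall q d t, ∏ i, Complex.exp (x i * θ i * Complex.I)
      = ∑ ε : Fin d → ℤˣ, ∑ x ∈ latticeBall q d t, ∏ i, Complex.exp (((ε i : ℤ) * x i : ℤ) * θ i * Complex.I) := by
    rw [← Finset.sum_congr rfl (fun ε _ => h1 ε), Finset.sum_const, nsmul_eq_mul]
    simp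
  have h3 : ∀ x : Fin d → ℤ, ∑ ε : Fin d → ℤˣ, ∏ i, Complex.exp (((ε i : ℤ) * x i : ℤ) * θ i * Complex.I)
      = 2 ^ d * ∏ i, Complex.cos (x i * θ i) := by
    intro x
    have := Finset.prod_univ_sum (fun _ : Fin d => (univ : Finset ℤˣ))
      (fun i (e : ℤˣ) => Complex.exp (((e : ℤ) * x i : ℤ) * θ i * Complex.I))
    rw [Fintype.piFinset_univ] at this
    rw [← this]
    have h4 : ∀ i, ∑ e : ℤˣ, Complex.exp (((e : ℤ) * x i : ℤ) * θ i * Complex.I)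
        = 2 * Complex.cos (x i * θ i) := by
      intro i
      rw [show (univ : Finset ℤˣ) = {1, -1} from rfl, Finset.sum_pair (by decide), Complex.two_cos]
      simp
    rw [Finset.prod_congr rfl (fun i _ => h4 i), Finset.prod_mul_distrib]
    simp
  rw [Finset.sum_comm, Finset.sum_congr rfl (fun x _ => h3 x), ← Finset.mul_sum] at h2
  have h5 := mul_left_cancel₀ (pow_ne_zero d two_ne_zero : (2 : ℂ) ^ d ≠ 0) h2
  rw [h5, mult]
  push_cast
  rfl

end DF

namespace DF
open Finset

/-- abstract data for the ergodic maximal theorem -/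
structure Erg (V : Type) [CommRing V] [Algebra ℝ V] where
  ip : V →ₗ[ℝ] V →ₗ[ℝ] ℝ
  Pos : V → Prop
  k : V
  symm : ∀ f g, ip f g = ip g f
  cs : ∀ f g, ip f g ≤ √(ip f f) * √(ip g g)
  nn : ∀ f, 0 ≤ ip f f
  pos_zero : Pos 0
  pos_one : Pos 1
  pos_add : ∀ f g, Pos f → Pos g → Pos (f + g)
  pos_mul : ∀ f g, Pos f → Pos g → Pos (f * g)
  pos_smul : ∀ (c : ℝ) f, 0 ≤ c → Pos f → Pos (c • f)
  ip_pos : ∀ f g, Pos f → Pos g → 0 ≤ ip f g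
  k_pos : Pos k
  k_adj : ∀ f g, ip (k * f) g = ip f (k * g)
  k_con : ∀ f, ip (k * f) (k * f) ≤ ip f f

namespace Erg
variable {V : Type} [CommRing V] [Algebra ℝ V] (E : Erg V)

noncomputable def A (N : ℕ) : V := (N : ℝ)⁻¹ • ∑ j ∈ range N, E.k ^ j

lemma pos_pow (n : ℕ) : E.Pos (E.k ^ n) := by
  induction n with
  | zero => rw [pow_zero]; exact E.pos_one
  | succ n ih => rw [pow_succ]; exact E.pos_mul _ _ ih E.k_pos

lemma pos_sum {ι : Type*} (s : Finset ι) (g : ι → V) (hg : ∀ i ∈ s, E.Pos (g i)) :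
    E.Pos (∑ i ∈ s, g i) := by
  classical
  induction s using Finset.induction_on with
  | empty => rw [Finset.sum_empty]; exact E.pos_zero
  | insert a s ha ih =>
    rw [Finset.sum_insert ha]
    exact E.pos_add _ _ (hg _ (Finset.mem_insert_self _ _))
      (ih fun i hi => hg i (Finset.mem_insert_of_mem hi))

lemma A_pos (N : ℕ) : E.Pos (E.A N) :=
  E.pos_smul _ _ (by positivity) (E.pos_sum _ _ fun i _ => E.pos_pow i)

lemma pow_adj (n : ℕ) : ∀ f g, E.ip (E.k ^ n * f) g = E.ip f (E.k ^ n * g) := by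
  induction n with
  | zero => intro f g; simp
  | succ n ih =>
    intro f g
    rw [pow_succ, mul_assoc, ih, E.k_adj]
    congr 1; ring

lemma pow_con (n : ℕ) (f : V) : E.ip (E.k ^ n * f) (E.k ^ n * f) ≤ E.ip f f := by
  induction n with
  | zero => simp
  | succ n ih =>
    rw [pow_succ', mul_assoc]
    exact (E.k_con _).trans ih

lemma A_adj (N : ℕ) (f g : V) : E.ip (E.A N * f) g = E.ip f (E.A N * g) := by
  unfold A
  simp only [smul_mul_assoc, Finset.sum_mul, map_smul, map_sum, LinearMap.smul_apply,
    LinearMap.sum_apply]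
  congr 1
  exact Finset.sum_congr rfl fun i _ => E.pow_adj i f g

lemma A_bd (N : ℕ) (f g : V) : E.ip (E.A N * f) g ≤ √(E.ip f f) * √(E.ip g g) := by
  unfold A
  simp only [smul_mul_assoc, Finset.sum_mul, map_smul, map_sum, LinearMap.smul_apply,
    LinearMap.sum_apply, smul_eq_mul]
  rcases Nat.eq_zero_or_pos N with rfl | hN
  · simp; positivity
  rw [inv_mul_le_iff₀ (by exact_mod_cast hN)]
  have : ∀ i ∈ range N, E.ip (E.k ^ i * f) g ≤ √(E.ip f f) * √(E.ip g g) := by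
    intro i _
    refine (E.cs _ _).trans ?_
    gcongr
    exact E.pow_con i f
  refine (Finset.sum_le_sum this).trans (le_of_eq ?_)
  simp

lemma AA (M N : ℕ) (hM : 1 ≤ M) (hMN : M ≤ N) :
    E.Pos ((2 : ℝ) • E.A (2 * N) - E.A M * E.A N) := by
  have hM0 : (M : ℝ) ≠ 0 := by positivity
  have hN0 : (N : ℝ) ≠ 0 := by
    have : 0 < N := by omega
    positivity
  have key : (2 : ℝ) • E.A (2 * N) - E.A M * E.A N = ((M : ℝ)⁻¹ * (N : ℝ)⁻¹) •
      ∑ i ∈ range M, ∑ l ∈ range (2 * N) \ Ico i (i + N), E.k ^ l := by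
    have h1 : ∀ i ∈ range M, ∑ l ∈ range (2 * N) \ Ico i (i + N), E.k ^ l
        = (∑ l ∈ range (2 * N), E.k ^ l) - E.k ^ i * ∑ j ∈ range N, E.k ^ j := by
      intro i hi
      have hi := Finset.mem_range.1 hi
      have hsub : Ico i (i + N) ⊆ range (2 * N) := by
        intro l hl
        rw [Finset.mem_Ico] at hl; rw [Finset.mem_range]; omega
      rw [← Finset.sum_sdiff hsub, Finset.sum_Ico_eq_sum_range, Finset.mul_sum]
      simp [pow_add]
    rw [Finset.sum_congr rfl h1, Finset.sum_sub_distrib, ← Finset.sum_mul, smul_sub]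
    congr 1
    · unfold A
      rw [Finset.sum_const, Finset.card_range, ← Nat.cast_smul_eq_nsmul ℝ, smul_smul, smul_smul]
      congr 1
      push_cast
      field_simp
    · unfold A
      rw [smul_mul_smul_comm]
  rw [key]
  exact E.pos_smul _ _ (by positivity) (E.pos_sum _ _ fun i _ => E.pos_sum _ _ fun l _ => E.pos_pow l)

lemma ip_mono (u v : V) (hu : E.Pos u) (hv : E.Pos v) : E.ip u u ≤ E.ip (u + v) (u + v) := by
  simp only [map_add, LinearMap.add_apply]
  have h1 := E.ip_pos u v hu hv
  have h2 := E.ip_pos v u hv hu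
  have h3 := E.ip_pos v v hv hv
  linarith

noncomputable def a (n : ℕ) : V := E.A (2 ^ n)

lemma pair (m n : ℕ) (f g : V) (hf : E.Pos f) (hg : E.Pos g) (hmn : m ≤ n) :
    E.ip (E.a m * f) (E.a n * g) ≤ 2 * E.ip (E.a (n + 1) * f) g := by
  have h := E.AA (2 ^ m) (2 ^ n) Nat.one_le_two_pow (Nat.pow_le_pow_right (by norm_num) hmn)
  have h1 := E.ip_pos _ _ (E.pos_mul _ _ h hf) hg
  rw [sub_mul, map_sub, LinearMap.sub_apply, smul_mul_assoc, map_smul, LinearMap.smul_apply,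
    smul_eq_mul, ← pow_succ'] at h1
  have h2 : E.ip (E.a m * f) (E.a n * g) = E.ip (E.A (2 ^ m) * E.A (2 ^ n) * f) g := by
    unfold a
    rw [← E.A_adj]
    congr 2; ring
  rw [h2]
  unfold a
  linarith

def P (R : ℕ) (c : ℝ) : Prop := ∀ (f : V) (g : ℕ → V), E.Pos f → (∀ n, E.Pos (g n)) →
  ∑ n ∈ range R, E.ip (E.a n * f) (g n) ≤
    c * √(E.ip f f) * √(E.ip (∑ n ∈ range R, g n) (∑ n ∈ range R, g n))

lemma P_start (R : ℕ) : E.P R R := by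
  intro f g hf hg
  have : ∀ n ∈ range R, E.ip (E.a n * f) (g n) ≤
    √(E.ip f f) * √(E.ip (∑ n ∈ range R, g n) (∑ n ∈ range R, g n)) := by
    intro n hn
    refine (E.A_bd _ _ _).trans ?_
    gcongr
    rw [← Finset.add_sum_erase _ _ hn]
    exact E.ip_mono _ _ (hg n) (E.pos_sum _ _ fun i _ => hg i)
  refine (Finset.sum_le_sum this).trans (le_of_eq ?_)
  simp; ring

lemma P_step (R : ℕ) (c : ℝ) (hc : 0 ≤ c) (h : E.P R c) : E.P R ((c + 5) / 2) := by
  intro f g hf hg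
  set G := ∑ n ∈ range R, g n with hG
  have hGp : E.Pos G := E.pos_sum _ _ fun i _ => hg i
  set S := ∑ n ∈ range R, E.a n * g n with hS
  have e1 : ∑ n ∈ range R, E.ip (E.a n * f) (g n) = E.ip f S := by
    rw [hS, map_sum]
    exact Finset.sum_congr rfl fun n _ => E.A_adj _ _ _
  have hap : ∀ n, E.Pos (E.a n) := fun n => E.A_pos _
  -- bound of the square
  have e2 : E.ip S S ≤ 4 * ∑ n ∈ range R, E.ip (E.a (n + 1) * G) (g n) := by
    have h1 : E.ip S S = ∑ m ∈ range R, ∑ n ∈ range R, E.ip (E.a m * g m) (E.a n * g n) := by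
      conv_lhs => rw [hS]
      simp only [map_sum, LinearMap.sum_apply]
      exact Finset.sum_comm
    have h2 : ∀ m n, E.ip (E.a m * g m) (E.a n * g n) ≤
        2 * E.ip (E.a (n + 1) * g m) (g n) + 2 * E.ip (E.a (m + 1) * g n) (g m) := by
      intro m n
      have p1 := E.ip_pos _ _ (E.pos_mul _ _ (hap (n + 1)) (hg m)) (hg n)
      have p2 := E.ip_pos _ _ (E.pos_mul _ _ (hap (m + 1)) (hg n)) (hg m)
      rcases le_total m n with hmn | hmn
      · have := E.pair m n _ _ (hg m) (hg n) hmn; linarith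
      · have := E.pair n m _ _ (hg n) (hg m) hmn
        rw [E.symm]; linarith
    have h3 : ∑ m ∈ range R, ∑ n ∈ range R, E.ip (E.a (n + 1) * g m) (g n)
        = ∑ n ∈ range R, E.ip (E.a (n + 1) * G) (g n) := by
      rw [Finset.sum_comm]
      refine Finset.sum_congr rfl fun n _ => ?_
      rw [hG, Finset.mul_sum, map_sum, LinearMap.sum_apply]
    have h4 : ∑ m ∈ range R, ∑ n ∈ range R, E.ip (E.a (m + 1) * g n) (g m)
        = ∑ n ∈ range R, E.ip (E.a (n + 1) * G) (g n) := by
      rw [← h3, Finset.sum_comm]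
    rw [h1]
    refine (Finset.sum_le_sum fun m _ => Finset.sum_le_sum fun n _ => h2 m n).trans (le_of_eq ?_)
    simp only [Finset.sum_add_distrib, ← Finset.mul_sum]
    rw [h3, h4]; ring
  have e3 : ∑ n ∈ range R, E.ip (E.a (n + 1) * G) (g n) ≤ (c + 1) * E.ip G G := by
    set g' : ℕ → V := fun n => Nat.casesOn n 0 (fun m => g m) with hg'
    have hg'p : ∀ n, E.Pos (g' n) := by
      intro n
      cases n with
      | zero => exact E.pos_zero
      | succ m => exact hg m
    have s1 : ∑ n ∈ range R, E.ip (E.a (n + 1) * G) (g n)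
        = ∑ n ∈ range (R + 1), E.ip (E.a n * G) (g' n) := by
      rw [Finset.sum_range_succ']
      simp [hg']
    have s2 : G = ∑ n ∈ range R, g' n + g' R := by
      rw [← Finset.sum_range_succ, Finset.sum_range_succ']
      simp [hg', hG]
    have hG'p : E.Pos (∑ n ∈ range R, g' n) := E.pos_sum _ _ fun i _ => hg'p i
    rw [s1, Finset.sum_range_succ]
    have t1 := h G g' hGp hg'p
    have t2 := E.A_bd (2 ^ R) G (g' R)
    have m1 : E.ip (∑ n ∈ range R, g' n) (∑ n ∈ range R, g' n) ≤ E.ip G G := by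
      have := E.ip_mono _ _ hG'p (hg'p R); rwa [← s2] at this
    have m2 : E.ip (g' R) (g' R) ≤ E.ip G G := by
      have := E.ip_mono _ _ (hg'p R) hG'p; rwa [add_comm, ← s2] at this
    have q0 : √(E.ip G G) * √(E.ip G G) = E.ip G G := Real.mul_self_sqrt (E.nn G)
    have t1' : c * √(E.ip G G) * √(E.ip (∑ n ∈ range R, g' n) (∑ n ∈ range R, g' n))
        ≤ c * √(E.ip G G) * √(E.ip G G) := by gcongr
    have t2' : √(E.ip G G) * √(E.ip (g' R) (g' R)) ≤ √(E.ip G G) * √(E.ip G G) := by gcongr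
    have t3 : E.ip (E.a R * G) (g' R) ≤ √(E.ip G G) * √(E.ip (g' R) (g' R)) := t2
    rw [mul_assoc c (√(E.ip G G)) (√(E.ip G G)), q0] at t1'
    linarith
  have e4 : √(E.ip S S) ≤ (c + 5) / 2 * √(E.ip G G) := by
    apply Real.sqrt_le_iff.2
    refine ⟨by positivity, ?_⟩
    rw [mul_pow, Real.sq_sqrt (E.nn G)]
    nlinarith [E.nn G, mul_nonneg (sq_nonneg (c - 3)) (E.nn G)]
  rw [e1]
  refine (E.cs f S).trans ?_
  calc √(E.ip f f) * √(E.ip S S) ≤ √(E.ip f f) * ((c + 5) / 2 * √(E.ip G G)) := by gcongr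
    _ = _ := by ring

lemma P_mono (R : ℕ) {c c' : ℝ} (hc : c ≤ c') (h : E.P R c) : E.P R c' := by
  intro f g hf hg
  refine (h f g hf hg).trans ?_
  gcongr

lemma P_six (R : ℕ) : E.P R 6 := by
  have : ∀ m : ℕ, E.P R (5 + (R : ℝ) / 2 ^ m) := by
    intro m
    induction m with
    | zero => exact E.P_mono R (by simp) (E.P_start R)
    | succ m ih =>
      have := E.P_step R _ (by positivity) ih
      convert this using 1
      rw [pow_succ]; field_simp; ring
  refine E.P_mono R ?_ (this R)
  have h : (R : ℝ) / 2 ^ R ≤ 1 := by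
    rw [div_le_one (by positivity)]
    exact_mod_cast (Nat.lt_two_pow_self).le
  linarith

end Erg
end DF

namespace DF
open Finset MeasureTheory

abbrev VV (d : ℕ) : Type := AddMonoidAlgebra ℝ (Fin d → ℤ)

noncomputable def th {d : ℕ} (r : Fin d → ℝ) : Fin d → ℝ := fun i => 2 * Real.pi * r i

noncomputable def ch {d : ℕ} (r : Fin d → ℝ) : Multiplicative (Fin d → ℤ) →* ℂ where
  toFun x := ∏ i, Complex.exp (x.toAdd i * th r i * Complex.I)
  map_one' := by simp
  map_mul' x y := by
    rw [← Finset.prod_mul_distrib]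
    refine Finset.prod_congr rfl fun i _ => ?_
    rw [← Complex.exp_add]
    congr 1
    simp only [toAdd_mul, Pi.add_apply]
    push_cast; ring

noncomputable def chf {d : ℕ} (x : Fin d → ℤ) (r : Fin d → ℝ) : ℂ :=
  ∏ i, Complex.exp (x i * th r i * Complex.I)

noncomputable def FF {d : ℕ} (r : Fin d → ℝ) : VV d →ₐ[ℝ] ℂ :=
  AddMonoidAlgebra.lift ℝ ℂ (Fin d → ℤ) (ch r)

lemma FF_single {d : ℕ} (r : Fin d → ℝ) (x : Fin d → ℤ) (c : ℝ) :
    FF r (AddMonoidAlgebra.single x c) = c * chf x r := by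
  rw [FF, AddMonoidAlgebra.lift_single]
  simp [ch, chf]

lemma FF_eq {d : ℕ} (r : Fin d → ℝ) (f : VV d) (S : Finset (Fin d → ℤ)) (hS : f.coeff.support ⊆ S) :
    FF r f = ∑ x ∈ S, (f.coeff x : ℂ) * chf x r := by
  rw [FF, AddMonoidAlgebra.lift_apply', Finsupp.sum_of_support_subset _ hS _ (by simp)]
  rfl

noncomputable def mu (d : ℕ) : Measure (Fin d → ℝ) :=
  Measure.pi (fun _ => (volume : Measure ℝ).restrict (Set.Ioc 0 1))

instance (d : ℕ) : IsFiniteMeasure (mu d) := by unfold mu; infer_instance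

lemma chf_cont {d : ℕ} (x : Fin d → ℤ) : Continuous (chf x) := by
  unfold chf th
  fun_prop

lemma norm_chf {d : ℕ} (x : Fin d → ℤ) (r : Fin d → ℝ) : ‖chf x r‖ = 1 := by
  rw [chf, norm_prod]
  refine Finset.prod_eq_one fun i _ => ?_
  have := Complex.norm_exp_ofReal_mul_I (x i * th r i)
  push_cast at this
  exact this

lemma int_one (k : ℤ) : ∫ r : ℝ, Complex.exp (k * (2 * Real.pi * r : ℝ) * Complex.I)
    ∂((volume : Measure ℝ).restrict (Set.Ioc 0 1)) = if k = 0 then 1 else 0 := by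
  split_ifs with h
  · subst h; simp
  · rw [← intervalIntegral.integral_of_le zero_le_one]
    have h2 : (2 * Real.pi * k * Complex.I : ℂ) ≠ 0 := by
      simp [h, Real.pi_ne_zero]
    have := integral_exp_mul_complex (a := 0) (b := 1) h2
    have e : ∀ r : ℝ, Complex.exp (k * (2 * Real.pi * r : ℝ) * Complex.I)
        = Complex.exp ((2 * Real.pi * k * Complex.I) * r) := by
      intro r; congr 1; push_cast; ring
    simp only [e]
    rw [this]
    have e2 : Complex.exp (2 * Real.pi * k * Complex.I * (1 : ℝ)) = 1 := by
      rw [Complex.exp_eq_one_iff]; exact ⟨k, by push_cast; ring⟩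
    rw [e2]; simp

lemma conj_chf {d : ℕ} (x : Fin d → ℤ) (r : Fin d → ℝ) :
    (starRingEnd ℂ) (chf x r) = chf (-x) r := by
  rw [chf, chf, map_prod]
  refine Finset.prod_congr rfl fun i _ => ?_
  rw [← Complex.exp_conj]
  congr 1
  simp

lemma chf_mul {d : ℕ} (x y : Fin d → ℤ) (r : Fin d → ℝ) :
    chf x r * chf y r = chf (x + y) r := by
  rw [chf, chf, chf, ← Finset.prod_mul_distrib]
  refine Finset.prod_congr rfl fun i _ => ?_
  rw [← Complex.exp_add]; congr 1; simp; ring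

lemma int_chf {d : ℕ} (x : Fin d → ℤ) : ∫ r, chf x r ∂(mu d) = if x = 0 then 1 else 0 := by
  unfold chf mu
  have := integral_fintype_prod_eq_prod (𝕜 := ℂ) (fun (i : Fin d) (r : ℝ) =>
    Complex.exp (x i * (2 * Real.pi * r : ℝ) * Complex.I))
    (μ := fun _ => (volume : Measure ℝ).restrict (Set.Ioc 0 1))
  unfold th
  rw [this, Finset.prod_congr rfl (fun i _ => int_one (x i))]
  split_ifs with h
  · subst h; simp
  · obtain ⟨i, hi⟩ := Function.ne_iff.1 h
    exact Finset.prod_eq_zero (Finset.mem_univ i) (by simpa using hi)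

lemma chf_int {d : ℕ} (x : Fin d → ℤ) : Integrable (chf x) (mu d) :=
  Integrable.of_bound (chf_cont x).aestronglyMeasurable 1
    (Filter.Eventually.of_forall fun r => (norm_chf x r).le)

noncomputable def dot {d : ℕ} : VV d →ₗ[ℝ] VV d →ₗ[ℝ] ℝ :=
  LinearMap.mk₂ ℝ (fun f g => f.coeff.sum fun x a => a * g.coeff x)
    (by
      intro f f' g
      rw [AddMonoidAlgebra.coeff_add, Finsupp.sum_add_index'] <;> intros <;> ring)
    (by
      intro c f g
      rw [AddMonoidAlgebra.coeff_smul, Finsupp.sum_smul_index' (by intros; ring), smul_eq_mul,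
        Finsupp.mul_sum]
      simp [mul_assoc])
    (by
      intro f g g'
      simp [mul_add, Finsupp.sum_add])
    (by
      intro c f g
      simp only [AddMonoidAlgebra.coeff_smul, smul_eq_mul, Finsupp.mul_sum, Finsupp.smul_apply]
      refine Finset.sum_congr rfl fun x _ => ?_
      ring)

lemma dot_eq {d : ℕ} (f g : VV d) (S : Finset (Fin d → ℤ)) (hS : f.coeff.support ⊆ S) :
    dot f g = ∑ x ∈ S, f.coeff x * g.coeff x := by
  change (f.coeff.sum fun x a => a * g.coeff x) = _
  rw [Finsupp.sum_of_support_subset _ hS _ (by simp)]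

lemma FF_cont {d : ℕ} (f : VV d) : Continuous (fun r => FF r f) := by
  simp only [FF_eq _ f _ (Finset.Subset.refl _)]
  have := fun x => chf_cont (d := d) x
  fun_prop

lemma FF_bdd {d : ℕ} (f : VV d) : ∃ C : ℝ, ∀ r, ‖FF r f‖ ≤ C := by
  refine ⟨∑ x ∈ f.coeff.support, ‖(f.coeff x : ℂ)‖, fun r => ?_⟩
  rw [FF_eq _ f _ (Finset.Subset.refl _)]
  refine (norm_sum_le _ _).trans (Finset.sum_le_sum fun x _ => ?_)
  rw [norm_mul, norm_chf, mul_one]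

lemma parseval {d : ℕ} (f g : VV d) :
    ∫ r, FF r f * (starRingEnd ℂ) (FF r g) ∂(mu d) = (dot f g : ℂ) := by
  classical
  set S := f.coeff.support ∪ g.coeff.support with hS
  have e : ∀ r, FF r f * (starRingEnd ℂ) (FF r g)
      = ∑ x ∈ S, ∑ y ∈ S, ((f.coeff x : ℂ) * (g.coeff y : ℂ)) * chf (x - y) r := by
    intro r
    rw [FF_eq r f S Finset.subset_union_left, FF_eq r g S Finset.subset_union_right, map_sum,
      Finset.sum_mul_sum]
    refine Finset.sum_congr rfl fun x _ => Finset.sum_congr rfl fun y _ => ?_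
    rw [map_mul, conj_chf, Complex.conj_ofReal, sub_eq_add_neg, ← chf_mul]; ring
  simp only [e]
  rw [integral_finset_sum _ (fun x _ => integrable_finset_sum _ fun y _ => (chf_int _).const_mul _)]
  rw [dot_eq f g S Finset.subset_union_left]
  push_cast
  refine Finset.sum_congr rfl fun x hx => ?_
  rw [integral_finset_sum _ (fun y _ => (chf_int _).const_mul _)]
  simp only [integral_const_mul, int_chf, sub_eq_zero, mul_ite, mul_one, mul_zero]
  rw [Finset.sum_ite_eq, if_pos hx]

lemma FF_sq_int {d : ℕ} (f : VV d) : Integrable (fun r => ‖FF r f‖ ^ 2) (mu d) := by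
  obtain ⟨C, hC⟩ := FF_bdd f
  refine Integrable.of_bound ((FF_cont f).norm.pow 2).aestronglyMeasurable (C ^ 2)
    (Filter.Eventually.of_forall fun r => ?_)
  rw [Real.norm_of_nonneg (by positivity)]
  exact pow_le_pow_left₀ (norm_nonneg _) (hC r) 2

lemma parseval_norm {d : ℕ} (f : VV d) : dot f f = ∫ r, ‖FF r f‖ ^ 2 ∂(mu d) := by
  have h := parseval f f
  have e : ∀ r, FF r f * (starRingEnd ℂ) (FF r f) = ((‖FF r f‖ ^ 2 : ℝ) : ℂ) := by
    intro r; rw [Complex.mul_conj, Complex.normSq_eq_norm_sq]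
  simp only [e] at h
  rw [integral_complex_ofReal] at h
  exact_mod_cast h.symm

noncomputable def kel (d : ℕ) : VV d := (2 * d : ℝ)⁻¹ • ∑ i : Fin d,
  (AddMonoidAlgebra.single (Pi.single i 1) 1 + AddMonoidAlgebra.single (-Pi.single i 1) 1)

noncomputable def Mel (q : ℝ) (d : ℕ) (t : ℝ) : VV d :=
  ((latticeBall q d t).card : ℝ)⁻¹ • ∑ y ∈ latticeBall q d t, AddMonoidAlgebra.single y 1

lemma chf_single {d : ℕ} (i : Fin d) (r : Fin d → ℝ) (k : ℤ) :
    chf (Pi.single i k) r = Complex.exp (k * th r i * Complex.I) := by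
  classical
  rw [chf, Finset.prod_eq_single i]
  · simp
  · intro j _ hj; simp [Pi.single_eq_of_ne hj]
  · simp

lemma FF_kel {d : ℕ} (r : Fin d → ℝ) : FF r (kel d) = (kap (th r) : ℂ) := by
  rw [kel, map_smul, map_sum]
  have : ∀ i : Fin d, FF r (AddMonoidAlgebra.single (Pi.single i 1) 1
      + AddMonoidAlgebra.single (-Pi.single i 1) 1) = 2 * Complex.cos (th r i) := by
    intro i
    rw [map_add, FF_single, FF_single, ← Pi.single_neg, chf_single, chf_single, Complex.two_cos]
    simp
  rw [Finset.sum_congr rfl fun i _ => this i, kap, ← Finset.mul_sum, Complex.real_smul]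
  push_cast
  rw [mul_inv]
  field_simp

lemma FF_Mel {q : ℝ} (hq : 1 ≤ q) {d : ℕ} {t : ℝ} (ht : 0 ≤ t) (r : Fin d → ℝ) :
    FF r (Mel q d t) = (mult q d t (th r) : ℂ) := by
  rw [← sign_sum hq ht, Mel, map_smul, map_sum, Complex.real_smul]
  push_cast
  congr 1
  refine Finset.sum_congr rfl fun x _ => ?_
  rw [FF_single, chf]; simp

lemma coeff_single_mul {d : ℕ} (y : Fin d → ℤ) (c : ℝ) (f : VV d) (x : Fin d → ℤ) :
    (AddMonoidAlgebra.single y c * f).coeff x = c * f.coeff (x - y) := by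
  apply AddMonoidAlgebra.coeff_single_mul_eq_mul_coeff
  intro m _
  constructor
  · intro h; rw [← h]; simp
  · intro h; rw [h]; simp

def PP {d : ℕ} (f : VV d) : Prop := ∀ x, 0 ≤ f.coeff x

lemma PP_mul {d : ℕ} (f g : VV d) (hf : PP f) (hg : PP g) : PP (f * g) := by
  classical
  intro x
  rw [AddMonoidAlgebra.coeff_mul]
  refine Finset.sum_nonneg fun y _ => Finset.sum_nonneg fun z _ => ?_
  dsimp only
  split_ifs
  · exact mul_nonneg (hf _) (hg _)
  · exact le_rfl

lemma PP_add {d : ℕ} (f g : VV d) (hf : PP f) (hg : PP g) : PP (f + g) := by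
  intro x
  rw [AddMonoidAlgebra.coeff_add, Finsupp.add_apply]
  exact add_nonneg (hf x) (hg x)

lemma PP_single {d : ℕ} (y : Fin d → ℤ) (c : ℝ) (hc : 0 ≤ c) :
    PP (AddMonoidAlgebra.single y c : VV d) := by
  classical
  intro x
  rw [AddMonoidAlgebra.coeff_single_apply]
  split_ifs <;> simp [hc]

lemma PP_smul {d : ℕ} (c : ℝ) (f : VV d) (hc : 0 ≤ c) (hf : PP f) : PP (c • f) := by
  intro x
  rw [AddMonoidAlgebra.coeff_smul_apply]
  exact mul_nonneg hc (hf x)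

lemma PP_sum {d : ℕ} {ι : Type*} (s : Finset ι) (g : ι → VV d) (hg : ∀ i ∈ s, PP (g i)) :
    PP (∑ i ∈ s, g i) := by
  intro x
  rw [AddMonoidAlgebra.coeff_sum, Finsupp.finset_sum_apply]
  exact Finset.sum_nonneg fun i hi => hg i hi x

lemma kap_abs {d : ℕ} (θ : Fin d → ℝ) : |kap θ| ≤ 1 := by
  rcases Nat.eq_zero_or_pos d with rfl | hd
  · simp [kap]
  have hd0 : (0 : ℝ) < d := by exact_mod_cast hd
  rw [kap, abs_div, abs_of_pos hd0, div_le_one hd0]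
  refine (Finset.abs_sum_le_sum_abs _ _).trans ?_
  refine (Finset.sum_le_sum fun x _ => Real.abs_cos_le_one _).trans ?_
  simp

lemma dot_nn {d : ℕ} (f : VV d) : 0 ≤ dot f f := by
  rw [dot_eq f f _ (Finset.Subset.refl _)]
  exact Finset.sum_nonneg fun x _ => mul_self_nonneg _

lemma dot_cs {d : ℕ} (f g : VV d) : dot f g ≤ √(dot f f) * √(dot g g) := by
  classical
  set S := f.coeff.support ∪ g.coeff.support with hS
  rw [dot_eq f g S Finset.subset_union_left, dot_eq f f S Finset.subset_union_left,
    dot_eq g g S Finset.subset_union_right]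
  have := Real.sum_mul_le_sqrt_mul_sqrt S (fun x => f.coeff x) (fun x => g.coeff x)
  simpa [sq] using this

lemma dot_symm {d : ℕ} (f g : VV d) : dot f g = dot g f := by
  classical
  rw [dot_eq f g (f.coeff.support ∪ g.coeff.support) Finset.subset_union_left,
    dot_eq g f (f.coeff.support ∪ g.coeff.support) Finset.subset_union_right]
  exact Finset.sum_congr rfl fun x _ => mul_comm _ _

lemma dot_adj {d : ℕ} (a f g : VV d) (κ : (Fin d → ℝ) → ℝ) (ha : ∀ r, FF r a = (κ r : ℂ)) :
    dot (a * f) g = dot f (a * g) := by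
  have : ((dot (a * f) g : ℝ) : ℂ) = ((dot f (a * g) : ℝ) : ℂ) := by
    rw [← parseval, ← parseval]
    congr 1
    ext r
    simp only [map_mul, ha, Complex.conj_ofReal]
    ring
  exact_mod_cast this

lemma dot_con {d : ℕ} (a f : VV d) (ha : ∀ r, ‖FF r a‖ ≤ 1) :
    dot (a * f) (a * f) ≤ dot f f := by
  rw [parseval_norm, parseval_norm]
  refine integral_mono (FF_sq_int _) (FF_sq_int _) fun r => ?_
  dsimp only
  rw [map_mul, norm_mul, mul_pow]
  have := pow_le_one₀ (n := 2) (norm_nonneg _) (ha r)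
  nlinarith [sq_nonneg ‖FF r f‖]

noncomputable def EE (d : ℕ) : Erg (VV d) where
  ip := dot
  Pos := PP
  k := kel d
  symm := dot_symm
  cs := dot_cs
  nn := dot_nn
  pos_zero := fun x => by simp
  pos_one := by rw [AddMonoidAlgebra.one_def]; exact PP_single _ _ zero_le_one
  pos_add := PP_add
  pos_mul := PP_mul
  pos_smul := PP_smul
  ip_pos := by
    intro f g hf hg
    rw [dot_eq f g _ (Finset.Subset.refl _)]
    exact Finset.sum_nonneg fun x _ => mul_nonneg (hf x) (hg x)
  k_pos := PP_smul _ _ (by positivity) (PP_sum _ _ fun i _ =>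
    PP_add _ _ (PP_single _ _ zero_le_one) (PP_single _ _ zero_le_one))
  k_adj := fun f g => dot_adj _ f g (fun r => kap (th r)) FF_kel
  k_con := fun f => dot_con _ f fun r => by
    rw [FF_kel, Complex.norm_real]; exact kap_abs _

end DF

namespace DF
open Finset

noncomputable def al (N : ℕ) (κ : ℝ) : ℝ := (N : ℝ)⁻¹ * ∑ j ∈ range N, κ ^ j

lemma pow_abs_le {κ : ℝ} (h : |κ| ≤ 1) (j : ℕ) : |κ ^ j| ≤ 1 := by
  rw [abs_pow]; exact pow_le_one₀ (abs_nonneg _) h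

lemma al_abs {κ : ℝ} (h : |κ| ≤ 1) (N : ℕ) (hN : 1 ≤ N) : |al N κ| ≤ 1 := by
  have hN0 : (0 : ℝ) < N := by exact_mod_cast hN
  rw [al, abs_mul, abs_inv, abs_of_pos hN0, inv_mul_le_iff₀ hN0]
  refine (Finset.abs_sum_le_sum_abs _ _).trans ?_
  refine (Finset.sum_le_sum fun j _ => pow_abs_le h j).trans ?_
  simp

lemma al_decay {κ : ℝ} (h : |κ| ≤ 1) (N : ℕ) (hN : 1 ≤ N) : |al N κ| * (N * (1 - κ)) ≤ 2 := by
  have hN0 : (0 : ℝ) < N := by exact_mod_cast hN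
  have hk := abs_le.1 h
  have h1 : al N κ * (N * (1 - κ)) = 1 - κ ^ N := by
    have := geom_sum_mul_neg κ N
    rw [← this, al]; field_simp
  have h2 : |al N κ| * (N * (1 - κ)) = |1 - κ ^ N| := by
    rw [← h1, abs_mul, abs_of_nonneg (by nlinarith : (0:ℝ) ≤ N * (1 - κ))]
  rw [h2]
  have := abs_le.1 (pow_abs_le h N)
  rw [abs_le]; constructor <;> linarith

lemma al_near {κ : ℝ} (h : |κ| ≤ 1) (N : ℕ) (hN : 1 ≤ N) : |1 - al N κ| ≤ N * (1 - κ) := by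
  have hN0 : (0 : ℝ) < N := by exact_mod_cast hN
  have hk := abs_le.1 h
  have e : 1 - al N κ = (N : ℝ)⁻¹ * ∑ j ∈ range N, (1 - κ ^ j) := by
    rw [al, Finset.sum_sub_distrib, mul_sub]
    simp [hN0.ne']
  rw [e, abs_mul, abs_inv, abs_of_pos hN0, inv_mul_le_iff₀ hN0]
  refine (Finset.abs_sum_le_sum_abs _ _).trans ?_
  have : ∀ j ∈ range N, |1 - κ ^ j| ≤ N * (1 - κ) := by
    intro j hj
    have hj := Finset.mem_range.1 hj
    rw [← geom_sum_mul_neg κ j, abs_mul, abs_of_nonneg (by linarith : 0 ≤ 1 - κ)]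
    apply mul_le_mul_of_nonneg_right _ (by linarith)
    refine (Finset.abs_sum_le_sum_abs _ _).trans ?_
    refine (Finset.sum_le_sum fun j _ => pow_abs_le h j).trans ?_
    simp
    exact_mod_cast hj.le
  refine (Finset.sum_le_sum this).trans ?_
  simp

noncomputable def hh (y : ℝ) : ℝ := y ^ 2 / (1 + y ^ 2)

lemma hh_bd (y : ℝ) : 0 ≤ hh y ∧ hh y ≤ 1 := by
  unfold hh
  refine ⟨by positivity, ?_⟩
  rw [div_le_one (by positivity)]; linarith

lemma hh_diff (y : ℝ) : hh (2 * y) - hh y = 3 * y ^ 2 / ((1 + 4 * y ^ 2) * (1 + y ^ 2)) := by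
  unfold hh
  have : (1 + (2 * y) ^ 2) ≠ 0 := by positivity
  have : (1 + 4 * y ^ 2) ≠ 0 := by positivity
  have : (1 + y ^ 2) ≠ 0 := by positivity
  field_simp
  ring

lemma hh_key {L b y : ℝ} (hb : 0 ≤ b) (hy : 0 ≤ y) (hL : 0 ≤ L) (h1 : b ≤ L * y) (h2 : b * y ≤ L) :
    b ^ 2 ≤ 10 / 3 * L ^ 2 * (hh (2 * y) - hh y) := by
  rw [hh_diff, mul_div_assoc', le_div_iff₀ (by positivity)]
  have h1' : b ^ 2 ≤ L ^ 2 * y ^ 2 := by rw [← mul_pow]; exact pow_le_pow_left₀ hb h1 2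
  have h2' : b ^ 2 * y ^ 2 ≤ L ^ 2 := by
    rw [← mul_pow]; exact pow_le_pow_left₀ (by positivity) h2 2
  have hz : 0 ≤ y ^ 2 := by positivity
  have hB : 0 ≤ b ^ 2 := by positivity
  generalize y ^ 2 = z at *
  generalize b ^ 2 = B at *
  rcases le_total z 1 with hz1 | hz1
  · have : (1 + 4 * z) * (1 + z) ≤ 10 := by nlinarith
    calc B * ((1 + 4 * z) * (1 + z)) ≤ B * 10 := by gcongr
      _ ≤ _ := by linarith
  · have : (1 + 4 * z) * (1 + z) ≤ 10 * (z * z) := by nlinarith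
    calc B * ((1 + 4 * z) * (1 + z)) ≤ B * (10 * (z * z)) := by gcongr
      _ = 10 * z * (B * z) := by ring
      _ ≤ 10 * z * L ^ 2 := by gcongr
      _ = _ := by ring

/-- the pointwise bound for one scale, `4 N ≤ d` -/
lemma delta_small {m s κ N : ℝ} {N' : ℕ} (hκ : |κ| ≤ 1) (hN' : 1 ≤ N') (h1 : (N' : ℝ) ≤ N)
    (h2 : N ≤ 2 * N') (hs : |s| ≤ 1) (hd : |m| * (N * (1 - κ ^ 2)) ≤ 4088)
    (hp : |1 - m| ≤ 16 * N * (1 - κ)) (hm : |s - m| ≤ 16 * N * (1 + κ)) :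
    (m - al N' κ - s * al N' (-κ)) ^ 2 ≤ 2 * (10 / 3 * 4090 ^ 2 *
      (hh (2 * (N' * (1 - |κ|))) - hh (N' * (1 - |κ|)))) + 8 * (1 / (N' : ℝ)) ^ 2 := by
  have hN0 : (0 : ℝ) < N' := by exact_mod_cast hN'
  have hk := abs_le.1 hκ
  have hκ' : |-κ| ≤ 1 := by rwa [abs_neg]
  have sqb : ∀ b e : ℝ, |e| ≤ 2 * (1 / (N' : ℝ)) →
      b ^ 2 ≤ 10 / 3 * 4090 ^ 2 * (hh (2 * (N' * (1 - |κ|))) - hh (N' * (1 - |κ|))) →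
      (b - e) ^ 2 ≤ 2 * (10 / 3 * 4090 ^ 2 *
      (hh (2 * (N' * (1 - |κ|))) - hh (N' * (1 - |κ|)))) + 8 * (1 / (N' : ℝ)) ^ 2 := by
    intro b e he hb
    have : e ^ 2 ≤ (2 * (1 / (N' : ℝ))) ^ 2 := by
      rw [← sq_abs]; exact pow_le_pow_left₀ (abs_nonneg _) he 2
    nlinarith [sq_nonneg (b + e)]
  rcases le_total 0 κ with h0 | h0
  · have hak : |κ| = κ := abs_of_nonneg h0
    apply sqb
    · rw [abs_mul, mul_one_div, le_div_iff₀ hN0]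
      have d1 := al_decay hκ' N' hN'
      have a0 := abs_nonneg (al N' (-κ))
      have : |s| * |al N' (-κ)| ≤ |al N' (-κ)| := by nlinarith
      have h3 : |al N' (-κ)| * N' ≤ |al N' (-κ)| * (N' * (1 - -κ)) := by
        apply mul_le_mul_of_nonneg_left _ a0; nlinarith
      nlinarith
    · rw [hak, ← sq_abs]
      apply hh_key (abs_nonneg _) (by nlinarith) (by norm_num)
      · have e : m - al N' κ = (1 - al N' κ) - (1 - m) := by ring
        rw [e]
        refine (abs_sub _ _).trans ?_
        have := al_near hκ N' hN'
        nlinarith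
      · have t1 : |m| * (N' * (1 - κ)) ≤ |m| * (N * (1 - κ ^ 2)) := by
          apply mul_le_mul_of_nonneg_left _ (abs_nonneg _)
          have : 1 - κ ≤ 1 - κ ^ 2 := by nlinarith
          exact mul_le_mul h1 this (by linarith) (by linarith)
        have t2 := al_decay hκ N' hN'
        have t3 : |m - al N' κ| ≤ |m| + |al N' κ| := abs_sub _ _
        have t4 : |m - al N' κ| * (N' * (1 - κ)) ≤ (|m| + |al N' κ|) * (N' * (1 - κ)) := by
          apply mul_le_mul_of_nonneg_right t3; nlinarith
        linarith
  · have hak : |κ| = -κ := abs_of_nonpos h0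
    have e0 : m - al N' κ - s * al N' (-κ) = (m - s * al N' (-κ)) - al N' κ := by ring
    rw [e0]
    apply sqb
    · rw [mul_one_div, le_div_iff₀ hN0]
      have d1 := al_decay hκ N' hN'
      have a0 := abs_nonneg (al N' κ)
      have h3 : |al N' κ| * N' ≤ |al N' κ| * (N' * (1 - κ)) := by
        apply mul_le_mul_of_nonneg_left _ a0; nlinarith
      linarith
    · rw [hak, ← sq_abs]
      have hsal : ∀ z : ℝ, |s * z| ≤ |z| := fun z => by
        rw [abs_mul]; nlinarith [abs_nonneg z]
      apply hh_key (abs_nonneg _) (by nlinarith) (by norm_num)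
      · have e : m - s * al N' (-κ) = s * (1 - al N' (-κ)) - (s - m) := by ring
        rw [e]
        refine (abs_sub _ _).trans ?_
        have := (hsal _).trans (al_near hκ' N' hN')
        nlinarith
      · have t1 : |m| * (N' * (1 - -κ)) ≤ |m| * (N * (1 - κ ^ 2)) := by
          apply mul_le_mul_of_nonneg_left _ (abs_nonneg _)
          have : 1 - -κ ≤ 1 - κ ^ 2 := by nlinarith
          exact mul_le_mul h1 this (by linarith) (by linarith)
        have t2 := al_decay hκ' N' hN'
        have t3 : |m - s * al N' (-κ)| ≤ |m| + |al N' (-κ)| :=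
          (abs_sub _ _).trans (by linarith [hsal (al N' (-κ))])
        have t4 : |m - s * al N' (-κ)| * (N' * (1 - -κ)) ≤ (|m| + |al N' (-κ)|) * (N' * (1 - -κ)) := by
          apply mul_le_mul_of_nonneg_right t3; nlinarith
        linarith

lemma delta_triv {m s κ : ℝ} {N' : ℕ} (hκ : |κ| ≤ 1) (hN' : 1 ≤ N') (hm : |m| ≤ 1) (hs : |s| ≤ 1) :
    (m - al N' κ - s * al N' (-κ)) ^ 2 ≤ 9 := by
  have h1 := abs_le.1 (al_abs hκ N' hN')
  have h2 := al_abs (by rwa [abs_neg] : |-κ| ≤ 1) N' hN'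
  have h3 : |s * al N' (-κ)| ≤ 1 := by
    rw [abs_mul]; nlinarith [abs_nonneg s, abs_nonneg (al N' (-κ))]
  have h3 := abs_le.1 h3
  have hm := abs_le.1 hm
  have : |m - al N' κ - s * al N' (-κ)| ≤ 3 := by rw [abs_le]; constructor <;> linarith
  rw [← sq_abs]; nlinarith [abs_nonneg (m - al N' κ - s * al N' (-κ))]

noncomputable def uu (d : ℕ) (a : ℝ) (k : ℕ) : ℝ :=
  2 * (10 / 3 * 4090 ^ 2 * (hh (2 ^ (k + 1) * a) - hh (2 ^ k * a))) + 8 * (1 / 4) ^ k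
    + 72 * (2 ^ k / d)

lemma hh_mono_step {y : ℝ} : 0 ≤ hh (2 * y) - hh y := by
  rw [hh_diff]; positivity

lemma uu_nonneg (d : ℕ) (a : ℝ) (k : ℕ) : 0 ≤ uu d a k := by
  unfold uu
  have : 0 ≤ hh (2 ^ (k + 1) * a) - hh (2 ^ k * a) := by
    rw [pow_succ', mul_assoc]; exact hh_mono_step
  positivity

lemma uu_sum (d : ℕ) (hd : 0 < d) (a : ℝ) (K : ℕ) (hK : 2 ^ K ≤ 2 * d) :
    ∑ k ∈ range K, uu d a k ≤ 7 * 4090 ^ 2 + 200 := by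
  unfold uu
  rw [Finset.sum_add_distrib, Finset.sum_add_distrib, ← Finset.mul_sum, ← Finset.mul_sum,
    ← Finset.mul_sum, ← Finset.mul_sum, ← Finset.sum_div, Finset.sum_range_sub (fun k => hh (2 ^ k * a))]
  have h1 := hh_bd (2 ^ K * a)
  have h2 := hh_bd (2 ^ 0 * a)
  have h3 : ∑ k ∈ range K, (1 / 4 : ℝ) ^ k ≤ 2 := geom_le _ (by norm_num) (by norm_num) K
  have h4 : (∑ k ∈ range K, (2 : ℝ) ^ k) / d ≤ 2 := by
    rw [div_le_iff₀ (by exact_mod_cast hd), geom_sum_eq (by norm_num)]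
    have : (2 : ℝ) ^ K ≤ 2 * d := by exact_mod_cast hK
    linarith
  have h5 : hh (2 ^ K * a) - hh (2 ^ 0 * a) ≤ 1 := by linarith [h1.2, h2.1]
  generalize hh (2 ^ K * a) - hh (2 ^ 0 * a) = u at h5 ⊢
  generalize ∑ k ∈ range K, (1 / 4 : ℝ) ^ k = v at h3 ⊢
  generalize (∑ k ∈ range K, (2 : ℝ) ^ k) / d = w at h4 ⊢
  norm_num
  linarith

lemma square_sum {q : ℝ} (hq : 1 ≤ q) {d : ℕ} (hd : 0 < d) (θ : Fin d → ℝ) (hκ : |kap θ| ≤ 1)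
    (T : Finset ℕ)
    (hT : ∀ n ∈ T, ((2 : ℝ) ^ n) ^ q ≤ d) :
    ∑ n ∈ T, (mult q d (2 ^ n) θ - al (2 ^ ⌊n * q⌋₊) (kap θ)
      - mult q d (2 ^ n) (fun _ => Real.pi) * al (2 ^ ⌊n * q⌋₊) (-kap θ)) ^ 2
      ≤ 7 * 4090 ^ 2 + 200 := by
  have hpow : ∀ n : ℕ, ((2 : ℝ) ^ n) ^ q = (2 : ℝ) ^ (n * q) := by
    intro n
    rw [← Real.rpow_natCast, ← Real.rpow_mul (by norm_num)]
  have hlow : ∀ n : ℕ, (2 : ℝ) ^ (⌊n * q⌋₊) ≤ ((2 : ℝ) ^ n) ^ q := by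
    intro n
    rw [hpow, ← Real.rpow_natCast]
    apply Real.rpow_le_rpow_of_exponent_le (by norm_num)
    exact Nat.floor_le (by positivity)
  have hup : ∀ n : ℕ, ((2 : ℝ) ^ n) ^ q ≤ 2 * (2 : ℝ) ^ (⌊n * q⌋₊) := by
    intro n
    rw [hpow, ← pow_succ', ← Real.rpow_natCast]
    apply Real.rpow_le_rpow_of_exponent_le (by norm_num)
    push_cast
    exact (Nat.lt_floor_add_one _).le
  have hinj : Function.Injective (fun n : ℕ => ⌊n * q⌋₊) := by
    apply StrictMono.injective
    apply strictMono_nat_of_lt_succ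
    intro n
    rw [Nat.lt_iff_add_one_le, Nat.le_floor_iff (by positivity)]
    push_cast
    have := Nat.floor_le (by positivity : 0 ≤ (n : ℝ) * q)
    linarith
  set a := 1 - |kap θ| with ha
  have hd0 : (0 : ℝ) < d := by exact_mod_cast hd
  have key : ∀ n ∈ T, (mult q d (2 ^ n) θ - al (2 ^ ⌊n * q⌋₊) (kap θ)
      - mult q d (2 ^ n) (fun _ => Real.pi) * al (2 ^ ⌊n * q⌋₊) (-kap θ)) ^ 2
      ≤ uu d a ⌊n * q⌋₊ := by
    intro n hn
    have ht : (1 : ℝ) ≤ 2 ^ n := one_le_pow₀ (by norm_num)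
    have hstep : 0 ≤ hh (2 ^ (⌊n * q⌋₊ + 1) * a) - hh (2 ^ ⌊n * q⌋₊ * a) := by
      rw [pow_succ', mul_assoc]; exact hh_mono_step
    rcases le_or_gt (4 * ((2 : ℝ) ^ n) ^ q) d with h4 | h4
    · have := delta_small (N' := 2 ^ ⌊n * q⌋₊) hκ Nat.one_le_two_pow (by push_cast; exact hlow n)
        (by push_cast; exact hup n) (mult_abs_le hq (by linarith) (fun _ => Real.pi))
        (mult_decay hq ht h4 θ) (mult_near_one hq ht h4 θ) (mult_near_sign hq ht h4 θ)
      refine this.trans ?_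
      unfold uu
      push_cast
      have e2 : (2 : ℝ) ^ (⌊n * q⌋₊ + 1) * a = 2 * (2 ^ ⌊n * q⌋₊ * a) := by
        rw [pow_succ']; ring
      rw [← ha, e2]
      have e1 : (1 / (2 : ℝ) ^ ⌊n * q⌋₊) ^ 2 = (1 / 4) ^ ⌊n * q⌋₊ := by
        rw [div_pow, div_pow, one_pow, one_pow, ← pow_mul, mul_comm, pow_mul]; norm_num
      rw [e1]
      have : (0 : ℝ) ≤ 72 * (2 ^ ⌊n * q⌋₊ / d) := by positivity
      linarith
    · have h9 := delta_triv (N' := 2 ^ ⌊n * q⌋₊) hκ Nat.one_le_two_pow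
        (mult_abs_le hq (by linarith : (0:ℝ) ≤ 2 ^ n) θ)
        (mult_abs_le hq (by linarith : (0:ℝ) ≤ 2 ^ n) (d := d) (fun _ => Real.pi))
      refine h9.trans ?_
      unfold uu
      have : (9 : ℝ) ≤ 72 * (2 ^ ⌊n * q⌋₊ / d) := by
        rw [mul_div_assoc', le_div_iff₀ hd0]
        linarith [hup n]
      have : (0 : ℝ) ≤ 8 * (1 / 4) ^ ⌊n * q⌋₊ := by positivity
      nlinarith
  refine (Finset.sum_le_sum key).trans ?_
  have e : ∑ n ∈ T, uu d a ⌊n * q⌋₊ = ∑ k ∈ T.image (fun n : ℕ => ⌊n * q⌋₊), uu d a k := by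
    rw [Finset.sum_image (fun x _ y _ h => hinj h)]
  rw [e]
  refine le_trans ?_ (uu_sum d hd a (Nat.log 2 d + 1) ?_)
  · apply Finset.sum_le_sum_of_subset_of_nonneg
    · intro k hk
      obtain ⟨n, hn, rfl⟩ := Finset.mem_image.1 hk
      rw [Finset.mem_range, Nat.lt_succ_iff]
      apply Nat.le_log_of_pow_le (by norm_num)
      have := (hlow n).trans (hT n hn)
      exact_mod_cast this
    · intro k _ _; exact uu_nonneg d a k
  · rw [pow_succ']
    have := Nat.pow_log_le_self 2 hd.ne'
    omega

end DF

namespace DF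
open Finset MeasureTheory

noncomputable def Am (d N : ℕ) : VV d := (N : ℝ)⁻¹ • ∑ j ∈ range N, (-kel d) ^ j

lemma FF_A {d : ℕ} (N : ℕ) (r : Fin d → ℝ) :
    FF r ((EE d).A N) = (al N (kap (th r)) : ℂ) := by
  rw [Erg.A, map_smul, map_sum, Complex.real_smul, al]
  push_cast
  congr 1
  refine sum_congr rfl fun j _ => ?_
  rw [map_pow]
  change (FF r (kel d)) ^ j = _
  rw [FF_kel]

lemma FF_Am {d : ℕ} (N : ℕ) (r : Fin d → ℝ) :
    FF r (Am d N) = (al N (-kap (th r)) : ℂ) := by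
  rw [Am, map_smul, map_sum, Complex.real_smul, al]
  push_cast
  congr 1
  refine sum_congr rfl fun j _ => ?_
  rw [map_pow, map_neg, FF_kel]

lemma A_sub_Am {d : ℕ} (N : ℕ) : PP ((EE d).A N - Am d N) := by
  rw [Erg.A, Am, ← smul_sub, ← Finset.sum_sub_distrib]
  refine PP_smul _ _ (by positivity) (PP_sum _ _ fun j _ => ?_)
  have h0 : PP ((kel d) ^ j) := (EE d).pos_pow j
  change PP ((kel d) ^ j - _)
  rcases Nat.even_or_odd j with h | h
  · rw [h.neg_pow, sub_self]; exact (EE d).pos_zero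
  · rw [h.neg_pow, sub_neg_eq_add]; exact PP_add _ _ h0 h0

lemma A_add_Am {d : ℕ} (N : ℕ) : PP ((EE d).A N + Am d N) := by
  rw [Erg.A, Am, ← smul_add, ← Finset.sum_add_distrib]
  refine PP_smul _ _ (by positivity) (PP_sum _ _ fun j _ => ?_)
  have h0 : PP ((kel d) ^ j) := (EE d).pos_pow j
  change PP ((kel d) ^ j + _)
  rcases Nat.even_or_odd j with h | h
  · rw [h.neg_pow]; exact PP_add _ _ h0 h0
  · rw [h.neg_pow, add_neg_cancel]; exact (EE d).pos_zero

lemma Am_le {d : ℕ} (N : ℕ) (f : VV d) (hf : PP f) (x : Fin d → ℤ) :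
    |(Am d N * f).coeff x| ≤ ((EE d).A N * f).coeff x := by
  have h1 := PP_mul _ f (A_sub_Am (d := d) N) hf x
  have h2 := PP_mul _ f (A_add_Am (d := d) N) hf x
  rw [sub_mul, AddMonoidAlgebra.coeff_sub, Finsupp.sub_apply] at h1
  rw [add_mul, AddMonoidAlgebra.coeff_add, Finsupp.add_apply] at h2
  rw [abs_le]; constructor <;> linarith

noncomputable def DD (q : ℝ) (d n : ℕ) : VV d :=
  Mel q d (2 ^ n) - (EE d).A (2 ^ ⌊n * q⌋₊)
    - mult q d (2 ^ n) (fun _ => Real.pi) • Am d (2 ^ ⌊n * q⌋₊)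

lemma DD_sum {q : ℝ} (hq : 1 ≤ q) {d : ℕ} (hd : 0 < d) (f : VV d) (T : Finset ℕ)
    (hT : ∀ n ∈ T, ((2 : ℝ) ^ n) ^ q ≤ d) :
    ∑ n ∈ T, dot (DD q d n * f) (DD q d n * f) ≤ (7 * 4090 ^ 2 + 200) * dot f f := by
  simp only [parseval_norm]
  rw [← integral_finset_sum _ (fun n _ => FF_sq_int _), ← integral_const_mul]
  refine integral_mono (integrable_finset_sum _ fun n _ => FF_sq_int _)
    ((FF_sq_int _).const_mul _) fun r => ?_
  dsimp only
  have h := square_sum hq hd (th r) (kap_abs _) T hT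
  refine le_trans (le_of_eq ?_) (mul_le_mul_of_nonneg_right h (sq_nonneg ‖FF r f‖))
  rw [Finset.sum_mul]
  refine sum_congr rfl fun n _ => ?_
  rw [map_mul, norm_mul, mul_pow]
  congr 1
  rw [DD, map_sub, map_sub, map_smul, FF_Mel hq (by positivity), FF_A, FF_Am, Complex.real_smul,
    ← Complex.ofReal_mul, ← Complex.ofReal_sub, ← Complex.ofReal_sub, Complex.norm_real,
    Real.norm_eq_abs, sq_abs]

lemma sq_le_dot {d : ℕ} (f : VV d) (X : Finset (Fin d → ℤ)) :
    ∑ x ∈ X, (f.coeff x) ^ 2 ≤ dot f f := by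
  classical
  rw [dot_eq f f (f.coeff.support ∪ X) subset_union_left]
  simp only [← sq]
  exact sum_le_sum_of_subset_of_nonneg subset_union_right fun _ _ _ => sq_nonneg _

lemma DD_sel {q : ℝ} (hq : 1 ≤ q) {d : ℕ} (hd : 0 < d) (f : VV d) (T : Finset ℕ)
    (hT : ∀ n ∈ T, ((2 : ℝ) ^ n) ^ q ≤ d) (X : Finset (Fin d → ℤ)) (ν : (Fin d → ℤ) → ℕ)
    (hν : ∀ x ∈ X, ν x ∈ T) :
    ∑ x ∈ X, ((DD q d (ν x) * f).coeff x) ^ 2 ≤ (7 * 4090 ^ 2 + 200) * dot f f := by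
  refine le_trans ?_ (DD_sum hq hd f T hT)
  refine le_trans ?_ (sum_le_sum fun n _ => sq_le_dot _ X)
  rw [sum_comm]
  refine sum_le_sum fun x hx => ?_
  exact single_le_sum (f := fun n => ((DD q d n * f).coeff x) ^ 2) (fun n _ => sq_nonneg _) (hν x hx)

/-- linearized maximal function of the ergodic averages -/
lemma A_sel {d : ℕ} (f : VV d) (hf : PP f) (X : Finset (Fin d → ℤ)) (ν : (Fin d → ℤ) → ℕ) :
    ∑ x ∈ X, (((EE d).a (ν x) * f).coeff x) ^ 2 ≤ 36 * dot f f := by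
  classical
  set R := X.sup ν + 1 with hR
  set w : (Fin d → ℤ) → ℝ := fun x => ((EE d).a (ν x) * f).coeff x with hw
  have hw0 : ∀ x, 0 ≤ w x := fun x => PP_mul _ f ((EE d).A_pos _) hf x
  set g : ℕ → VV d := fun k => ∑ x ∈ X with ν x = k, AddMonoidAlgebra.single x (w x) with hg
  have hmem : ∀ x ∈ X, ν x ∈ range R := by
    intro x hx
    rw [mem_range, hR, Nat.lt_succ_iff]
    exact le_sup (f := ν) hx
  have hds : ∀ (u : VV d) x c, dot u (AddMonoidAlgebra.single x c) = c * u.coeff x := by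
    intro u x c
    rw [dot_symm, dot_eq _ u {x} (by
      rw [AddMonoidAlgebra.coeff_single]; exact Finsupp.support_single_subset)]
    simp
  have h := (EE d).P_six R f g hf (fun n => PP_sum _ _ fun x _ => PP_single _ _ (hw0 x))
  change ∑ n ∈ range R, dot ((EE d).a n * f) (g n) ≤ 6 * √(dot f f) *
    √(dot (∑ n ∈ range R, g n) (∑ n ∈ range R, g n)) at h
  have hG : ∑ n ∈ range R, g n = ∑ x ∈ X, AddMonoidAlgebra.single x (w x) := by
    rw [hg]; exact sum_fiberwise_of_maps_to hmem _
  have hL : ∑ n ∈ range R, dot ((EE d).a n * f) (g n) = ∑ x ∈ X, w x ^ 2 := by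
    rw [← sum_fiberwise_of_maps_to hmem]
    refine sum_congr rfl fun n _ => ?_
    rw [hg, map_sum]
    refine sum_congr rfl fun x hx => ?_
    rw [hds, ← (mem_filter.1 hx).2, sq]
  have hco : ∀ x ∈ X, (∑ x ∈ X, AddMonoidAlgebra.single x (w x) : VV d).coeff x = w x := by
    intro x hx
    rw [AddMonoidAlgebra.coeff_sum, Finsupp.finset_sum_apply, sum_eq_single x]
    · simp
    · intro y _ hy; simp [hy]
    · intro h; exact absurd hx h
  have hQ : dot (∑ n ∈ range R, g n) (∑ n ∈ range R, g n) = ∑ x ∈ X, w x ^ 2 := by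
    rw [hG]
    conv_lhs => rw [map_sum]
    refine sum_congr rfl fun x hx => ?_
    rw [hds, hco x hx, sq]
  rw [hL, hQ] at h
  have hQ0 : 0 ≤ ∑ x ∈ X, w x ^ 2 := sum_nonneg fun x _ => sq_nonneg _
  change ∑ x ∈ X, w x ^ 2 ≤ _
  set Q := ∑ x ∈ X, w x ^ 2
  have h1 := Real.sq_sqrt hQ0
  have h2 := Real.sq_sqrt (dot_nn f)
  have h3 := Real.sqrt_nonneg Q
  have h4 := Real.sqrt_nonneg (dot f f)
  have h5 : √Q ≤ 6 * √(dot f f) := by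
    by_contra hc
    push Not at hc
    have : 0 < √Q := lt_of_le_of_lt (by positivity) hc
    nlinarith
  nlinarith

lemma M_sel {q : ℝ} (hq : 1 ≤ q) {d : ℕ} (hd : 0 < d) (f : VV d) (hf : PP f) (T : Finset ℕ)
    (hT : ∀ n ∈ T, ((2 : ℝ) ^ n) ^ q ≤ d) (X : Finset (Fin d → ℤ)) (ν : (Fin d → ℤ) → ℕ)
    (hν : ∀ x ∈ X, ν x ∈ T) :
    ∑ x ∈ X, ((Mel q d (2 ^ ν x) * f).coeff x) ^ 2 ≤ (2 * (7 * 4090 ^ 2 + 200) + 288) * dot f f := by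
  have h1 := DD_sel hq hd f T hT X ν hν
  have h2 := A_sel f hf X (fun x => ⌊ν x * q⌋₊)
  have h3 : ∑ x ∈ X, ((Mel q d (2 ^ ν x) * f).coeff x) ^ 2
      ≤ ∑ x ∈ X, (2 * ((DD q d (ν x) * f).coeff x) ^ 2
        + 8 * (((EE d).a ⌊ν x * q⌋₊ * f).coeff x) ^ 2) := by
    refine sum_le_sum fun x _ => ?_
    have e : (DD q d (ν x) * f).coeff x = (Mel q d (2 ^ ν x) * f).coeff x
        - ((EE d).a ⌊ν x * q⌋₊ * f).coeff x
        - mult q d (2 ^ ν x) (fun _ => Real.pi) * (Am d (2 ^ ⌊ν x * q⌋₊) * f).coeff x := by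
      rw [DD, sub_mul, sub_mul, smul_mul_assoc, AddMonoidAlgebra.coeff_sub,
        AddMonoidAlgebra.coeff_sub, Finsupp.sub_apply, Finsupp.sub_apply,
        AddMonoidAlgebra.coeff_smul_apply, smul_eq_mul]
      rfl
    have hA := Am_le (2 ^ ⌊ν x * q⌋₊) f hf x
    change _ ≤ ((EE d).a ⌊ν x * q⌋₊ * f).coeff x at hA
    have hs := mult_abs_le hq (by positivity : (0:ℝ) ≤ 2 ^ ν x) (d := d) (fun _ => Real.pi)
    set m := (Mel q d (2 ^ ν x) * f).coeff x
    set D := (DD q d (ν x) * f).coeff x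
    set A := ((EE d).a ⌊ν x * q⌋₊ * f).coeff x
    set B := (Am d (2 ^ ⌊ν x * q⌋₊) * f).coeff x
    set s := mult q d (2 ^ ν x) (fun _ => Real.pi)
    have hsB : |s * B| ≤ A := by
      rw [abs_mul]
      nlinarith [abs_nonneg s, abs_nonneg B]
    have hA0 : 0 ≤ A := (abs_nonneg _).trans hsB
    have hm : m = D + (A + s * B) := by rw [e]; ring
    have hAB : (A + s * B) ^ 2 ≤ 4 * A ^ 2 := by
      have := abs_le.1 hsB
      nlinarith
    rw [hm]
    nlinarith [sq_nonneg (D - (A + s * B))]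
  rw [sum_add_distrib, ← mul_sum, ← mul_sum] at h3
  nlinarith

lemma Mel_coeff (q : ℝ) (d : ℕ) (t : ℝ) (f : VV d) (x : Fin d → ℤ) :
    (Mel q d t * f).coeff x
      = ((latticeBall q d t).card : ℝ)⁻¹ * ∑ y ∈ latticeBall q d t, f.coeff (x - y) := by
  rw [Mel, smul_mul_assoc, AddMonoidAlgebra.coeff_smul_apply, smul_eq_mul, sum_mul,
    AddMonoidAlgebra.coeff_sum, Finsupp.finset_sum_apply]
  congr 1
  refine sum_congr rfl fun y _ => ?_
  rw [coeff_single_mul, one_mul]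

end DF

namespace DF
open Finset MeasureTheory
open scoped ENNReal NNReal

lemma M_fun {q : ℝ} (hq : 1 ≤ q) {d : ℕ} (hd : 0 < d) (g : (Fin d → ℤ) → ℝ) (hg : ∀ x, 0 ≤ g x)
    (T : Finset ℕ)
    (hT : ∀ n ∈ T, ((2 : ℝ) ^ n) ^ q ≤ d) (X : Finset (Fin d → ℤ)) (ν : (Fin d → ℤ) → ℕ)
    (hν : ∀ x ∈ X, ν x ∈ T) :
    ∃ S : Finset (Fin d → ℤ),
    ∑ x ∈ X, (((latticeBall q d (2 ^ ν x)).card : ℝ)⁻¹ *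
      ∑ y ∈ latticeBall q d (2 ^ ν x), g (x - y)) ^ 2
      ≤ (2 * (7 * 4090 ^ 2 + 200) + 288) * ∑ z ∈ S, g z ^ 2 := by
  classical
  set S : Finset (Fin d → ℤ) := X.biUnion fun x => (latticeBall q d (2 ^ ν x)).image fun y => x - y
    with hS
  refine ⟨S, ?_⟩
  set f : VV d := ∑ z ∈ S, AddMonoidAlgebra.single z (g z) with hf
  have hc : ∀ x, f.coeff x = if x ∈ S then g x else 0 := by
    intro x
    rw [hf, AddMonoidAlgebra.coeff_sum, Finsupp.finset_sum_apply]
    simp only [AddMonoidAlgebra.coeff_single, Finsupp.single_apply]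
    rw [Finset.sum_ite_eq' S x]
  have hsup : f.coeff.support ⊆ S := by
    intro x hx
    rw [Finsupp.mem_support_iff, hc] at hx
    by_contra h
    exact hx (if_neg h)
  have hP : PP f := PP_sum _ _ fun z _ => PP_single _ _ (hg z)
  have h := M_sel hq hd f hP T hT X ν hν
  rw [dot_eq f f S hsup] at h
  convert h using 1
  · refine sum_congr rfl fun x hx => ?_
    rw [Mel_coeff]
    congr 2
    refine sum_congr rfl fun y hy => ?_
    rw [hc, if_pos]
    exact mem_biUnion.2 ⟨x, hx, mem_image.2 ⟨y, hy, rfl⟩⟩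
  · congr 1
    refine sum_congr rfl fun z hz => ?_
    rw [hc, if_pos hz, sq]

lemma norm_avg_le {q : ℝ} (d : ℕ) (t : ℝ) (f : (Fin d → ℤ) → ℂ) (x : Fin d → ℤ) :
    ‖avgOp q d t f x‖ ≤ ∑ y ∈ latticeBall q d t, ((latticeBall q d t).card : ℝ)⁻¹ * ‖f (x - y)‖ := by
  rw [avgOp, norm_mul, norm_inv, Complex.norm_natCast, ← mul_sum]
  exact mul_le_mul_of_nonneg_left (norm_sum_le _ _) (by positivity)

lemma wsum {q : ℝ} (hq : 1 ≤ q) (d : ℕ) {t : ℝ} (ht : 0 ≤ t) :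
    ∑ y ∈ latticeBall q d t, ((latticeBall q d t).card : ℝ)⁻¹ = 1 := by
  rw [sum_const, nsmul_eq_mul]
  exact mul_inv_cancel₀ (ball_card_pos hq ht).ne'

lemma jensen {q : ℝ} (hq : 1 ≤ q) {d : ℕ} {t : ℝ} (ht : 0 ≤ t) (f : (Fin d → ℤ) → ℂ)
    (x : Fin d → ℤ) {p : ℝ} (hp : 2 ≤ p) :
    ‖avgOp q d t f x‖ ^ p ≤ (((latticeBall q d t).card : ℝ)⁻¹ *
      ∑ y ∈ latticeBall q d t, ‖f (x - y)‖ ^ (p / 2)) ^ 2 := by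
  have h := Real.rpow_arith_mean_le_arith_mean_rpow (latticeBall q d t)
    (fun _ => ((latticeBall q d t).card : ℝ)⁻¹) (fun y => ‖f (x - y)‖)
    (fun _ _ => by positivity) (wsum hq d ht) (fun _ _ => norm_nonneg _)
    (by linarith : 1 ≤ p / 2)
  rw [← mul_sum _ (fun y => ‖f (x - y)‖ ^ (p / 2))] at h
  have h2 : ‖avgOp q d t f x‖ ^ (p / 2) ≤ _ :=
    (Real.rpow_le_rpow (norm_nonneg _) (norm_avg_le d t f x) (by linarith)).trans h
  have e : ‖avgOp q d t f x‖ ^ p = (‖avgOp q d t f x‖ ^ (p / 2)) ^ 2 := by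
    rw [← Real.rpow_natCast, ← Real.rpow_mul (norm_nonneg _)]; congr 1; push_cast; ring
  rw [e]
  exact pow_le_pow_left₀ (by positivity) h2 2

lemma avg_sup {q : ℝ} (hq : 1 ≤ q) {d : ℕ} {t : ℝ} (ht : 0 ≤ t) (f : (Fin d → ℤ) → ℂ)
    (x : Fin d → ℤ) : ∃ z, ‖avgOp q d t f x‖ ≤ ‖f z‖ := by
  obtain ⟨y, hy, hmax⟩ := exists_max_image (latticeBall q d t) (fun y => ‖f (x - y)‖)
    ⟨0, ball_zero_mem hq ht⟩
  refine ⟨x - y, (norm_avg_le d t f x).trans ?_⟩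
  calc _ ≤ ∑ z ∈ latticeBall q d t, ((latticeBall q d t).card : ℝ)⁻¹ * ‖f (x - y)‖ :=
        sum_le_sum fun z hz => mul_le_mul_of_nonneg_left (hmax z hz) (by positivity)
    _ = _ := by rw [← sum_mul, wsum hq d ht, one_mul]

lemma main_tsum {q : ℝ} (hq : 1 ≤ q) {d : ℕ} (hd : 0 < d) {p : ℝ} (hp : 2 ≤ p)
    (f : (Fin d → ℤ) → ℂ) :
    ∑' x, (⨆ (n : ℕ) (_ : (2 : ℝ) ^ n ≤ (d : ℝ) ^ (1 / q)),
          (‖avgOp q d ((2 : ℝ) ^ n) f x‖₊ : ℝ≥0∞)) ^ p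
      ≤ ENNReal.ofReal (2 * (7 * 4090 ^ 2 + 200) + 288) * ∑' x, (‖f x‖₊ : ℝ≥0∞) ^ p := by
  classical
  have hq0 : 0 < q := by linarith
  have hd1 : (1 : ℝ) ≤ d := by exact_mod_cast hd
  have hp0 : 0 ≤ p := by linarith
  set T : Finset ℕ := (range (d + 1)).filter fun n => (2 : ℝ) ^ n ≤ (d : ℝ) ^ (1 / q) with hTd
  have hTm : ∀ n : ℕ, (2 : ℝ) ^ n ≤ (d : ℝ) ^ (1 / q) → n ∈ T := by
    intro n hn
    refine mem_filter.2 ⟨mem_range.2 ?_, hn⟩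
    have h1 : (d : ℝ) ^ (1 / q) ≤ (d : ℝ) ^ (1 : ℝ) :=
      Real.rpow_le_rpow_of_exponent_le hd1 (by rw [div_le_one hq0]; exact hq)
    rw [Real.rpow_one] at h1
    have h2 : 2 ^ n ≤ d := by exact_mod_cast hn.trans h1
    have := n.lt_two_pow_self
    omega
  have hT : ∀ n ∈ T, ((2 : ℝ) ^ n) ^ q ≤ d := by
    intro n hn
    have := Real.rpow_le_rpow (by positivity) (mem_filter.1 hn).2 hq0.le
    rwa [← Real.rpow_mul (by positivity), one_div, inv_mul_cancel₀ hq0.ne', Real.rpow_one] at this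
  have hT0 : T.Nonempty := ⟨0, hTm 0 (by
    rw [pow_zero]; exact Real.one_le_rpow hd1 (by positivity))⟩
  choose ν hνT hν using fun x : Fin d → ℤ =>
    exists_max_image T (fun n => ‖avgOp q d ((2 : ℝ) ^ n) f x‖) hT0
  set g : (Fin d → ℤ) → ℝ := fun z => ‖f z‖ ^ (p / 2) with hg
  have hof : ∀ u : ℂ, (‖u‖₊ : ℝ≥0∞) ^ p = ENNReal.ofReal (‖u‖ ^ p) := by
    intro u
    rw [← ENNReal.ofReal_rpow_of_nonneg (norm_nonneg _) hp0, ofReal_norm_eq_enorm]; rfl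
  have hF : ∀ x, (⨆ (n : ℕ) (_ : (2 : ℝ) ^ n ≤ (d : ℝ) ^ (1 / q)),
          (‖avgOp q d ((2 : ℝ) ^ n) f x‖₊ : ℝ≥0∞)) ^ p
      ≤ ENNReal.ofReal ((((latticeBall q d (2 ^ ν x)).card : ℝ)⁻¹ *
      ∑ y ∈ latticeBall q d (2 ^ ν x), g (x - y)) ^ 2) := by
    intro x
    refine le_trans (ENNReal.rpow_le_rpow (iSup₂_le fun n hn =>
      (?_ : _ ≤ (‖avgOp q d ((2 : ℝ) ^ ν x) f x‖₊ : ℝ≥0∞))) hp0) ?_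
    · exact_mod_cast hν x n (hTm n hn)
    · rw [hof]
      exact ENNReal.ofReal_le_ofReal (jensen hq (by positivity) f x hp)
  rw [ENNReal.tsum_eq_iSup_sum]
  refine iSup_le fun X => ?_
  obtain ⟨S, hS⟩ := M_fun hq hd g (fun x => by positivity) T hT X ν (fun x _ => hνT x)
  refine (sum_le_sum fun x _ => hF x).trans ?_
  rw [← ENNReal.ofReal_sum_of_nonneg (fun x _ => sq_nonneg _)]
  refine (ENNReal.ofReal_le_ofReal hS).trans ?_
  rw [ENNReal.ofReal_mul (by positivity), ENNReal.ofReal_sum_of_nonneg (fun x _ => sq_nonneg _)]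
  refine mul_le_mul_right ?_ _
  refine le_trans (le_of_eq ?_) (ENNReal.sum_le_tsum S)
  refine sum_congr rfl fun z _ => ?_
  rw [hof, hg]
  congr 1
  dsimp only
  rw [← Real.rpow_natCast, ← Real.rpow_mul (norm_nonneg _)]; congr 1; push_cast; ring

end DF

theorem stmt0 :
    ∃ C : ℝ≥0, 0 < C ∧ ∀ (q : ℝ), 1 ≤ q → ∀ p : ℝ≥0∞, 2 ≤ p →
      ∀ d : ℕ, 0 < d → ∀ f : (Fin d → ℤ) → ℂ,
      lpNorm p (fun x => ⨆ (n : ℕ) (_ : (2 : ℝ) ^ n ≤ (d : ℝ) ^ (1 / q)),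
          (‖avgOp q d ((2 : ℝ) ^ n) f x‖₊ : ℝ≥0∞))
        ≤ (C : ℝ≥0∞) * lpNorm p (fun x => (‖f x‖₊ : ℝ≥0∞)) := by
  have hC1 : (1 : ℝ≥0∞) ≤ ENNReal.ofReal (2 * (7 * 4090 ^ 2 + 200) + 288) := by
    rw [← ENNReal.ofReal_one]; exact ENNReal.ofReal_le_ofReal (by norm_num)
  refine ⟨(2 * (7 * 4090 ^ 2 + 200) + 288 : ℝ).toNNReal, Real.toNNReal_pos.2 (by norm_num), ?_⟩
  intro q hq p hp d hd f
  change _ ≤ ENNReal.ofReal (2 * (7 * 4090 ^ 2 + 200) + 288) * _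
  unfold lpNorm
  split_ifs with hpt
  · refine iSup_le fun x => iSup₂_le fun n _ => ?_
    obtain ⟨z, hz⟩ := DF.avg_sup hq (by positivity : (0 : ℝ) ≤ 2 ^ n) f x
    have h1 : (‖avgOp q d ((2 : ℝ) ^ n) f x‖₊ : ℝ≥0∞) ≤ (‖f z‖₊ : ℝ≥0∞) := by exact_mod_cast hz
    refine h1.trans ((le_iSup (fun x => (‖f x‖₊ : ℝ≥0∞)) z).trans ?_)
    exact le_mul_of_one_le_left zero_le hC1
  · have hp2 : 2 ≤ p.toReal := by
      have := ENNReal.toReal_mono hpt hp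
      simpa using this
    have h := DF.main_tsum hq hd hp2 f
    refine (ENNReal.rpow_le_rpow h (by positivity : 0 ≤ 1 / p.toReal)).trans ?_
    rw [ENNReal.mul_rpow_of_nonneg _ _ (by positivity)]
    refine mul_le_mul_left ?_ _
    refine (ENNReal.rpow_le_rpow_of_exponent_le hC1 (?_ : 1 / p.toReal ≤ 1)).trans_eq
      (ENNReal.rpow_one _)
    rw [div_le_one (by linarith)]; linarith
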